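/- arXiv:2010.11658 — 2 statements merged into one kernel-verified Lean document; each statement's English description precedes it below -/
import Mathlib

section
/- Let ℓ ≥ 1, let R ⊆ X^ℓ × Y^ℓ be a relation, and let k, q ≥ 1. Consider any k-parallel q-query quantum oracle algorithm (d, ψ₀, U_0, …, U_q) together with readout functions out_X : B → X^ℓ and out_Y : B → Y^ℓ such that the components of out_X(b) are pairwise distinct for every b ∈ B. Define p := M^{−|X|} · Σ_{H : X→Y} Σ_{b ∈ B with out_Y(b) = H(out_X(b)) (componentwise) and (out_X(b), out_Y(b)) ∈ R} |⟨e_b, ψ_H⟩|², and p' := Σ over all pairs (b, D) ∈ B × DB with D(out_X(b)_i) = out_Y(b)_i for all 1 ≤ i ≤ ℓ and (out_X(b), out_Y(b)) ∈ R, of |⟨e_b ⊗ e_D, Ψ⟩|², where Ψ is the compressed final state. Then √p ≤ √p' + √(ℓ/M). -/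
noncomputable section

/- `Ȳ = Y ∪ {⊥}` is modeled by `Option Y` (`⊥ = none`), databases `DB` by `X → Option Y`,
and all `ℓ²`-spaces by `EuclideanSpace ℂ _` with orthonormal basis `EuclideanSpace.single _ 1`. -/

/-- matrix (in the computational basis) of the single-register self-adjoint unitary `Comp` -/
def compMat (Y : Type*) [Fintype Y] [DecidableEq Y] :
    Matrix (Option Y) (Option Y) ℂ :=
  Matrix.of fun u v =>
    match u, v with
    | none, none => 0
    | some _, none => ((Real.sqrt (Fintype.card Y) : ℝ) : ℂ)⁻¹
    | none, some _ => ((Real.sqrt (Fintype.card Y) : ℝ) : ℂ)⁻¹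
    | some a, some b => (if a = b then (1 : ℂ) else 0) - ((Fintype.card Y : ℕ) : ℂ)⁻¹

/-- matrix of `Comp_DB`: `Comp` applied at every database register -/
def compDBMat (X Y : Type*) [Fintype X] [Fintype Y] [DecidableEq Y] :
    Matrix (X → Option Y) (X → Option Y) ℂ :=
  Matrix.of fun D' D => ∏ a : X, compMat Y (D' a) (D a)

/-- the basis permutation underlying `Õ`:
`(x, y, w, D) ↦ (x, y', w, D)` with `y'_i = y_i + D (x_i)` whenever `D (x_i) ∈ Y`,
and `y'_i = y_i` when `D (x_i) = ⊥` -/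
def shiftIdx {X Y : Type*} [AddCommGroup Y] {k d : ℕ}
    (p : ((Fin k → X) × (Fin k → Y) × Fin d) × (X → Option Y)) :
    ((Fin k → X) × (Fin k → Y) × Fin d) × (X → Option Y) :=
  ⟨⟨p.1.1, fun i => (p.2 (p.1.1 i)).elim (p.1.2.1 i) (fun v => p.1.2.1 i + v), p.1.2.2⟩,
    p.2⟩

/-- matrix of the compressed oracle `cO = (1_W ⊗ Comp_DB) ∘ Õ ∘ (1_W ⊗ Comp_DB)` -/
def cOMat (X Y : Type*) [Fintype X] [DecidableEq X] [Fintype Y] [DecidableEq Y]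
    [AddCommGroup Y] (k d : ℕ) :
    Matrix (((Fin k → X) × (Fin k → Y) × Fin d) × (X → Option Y))
           (((Fin k → X) × (Fin k → Y) × Fin d) × (X → Option Y)) ℂ := by
  classical
  exact (Matrix.of fun p' p => if p'.1 = p.1 then compDBMat X Y p'.2 p.2 else 0)
      * (Matrix.of fun p' p => if p' = shiftIdx p then 1 else 0)
      * (Matrix.of fun p' p => if p'.1 = p.1 then compDBMat X Y p'.2 p.2 else 0)

/-- matrix of an operator on `ℓ²` -/
def matOf {ι : Type*} [Fintype ι] [DecidableEq ι]
    (A : EuclideanSpace ℂ ι →L[ℂ] EuclideanSpace ℂ ι) : Matrix ι ι ℂ :=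
  Matrix.of fun i j =>
    inner (𝕜 := ℂ) (EuclideanSpace.single i 1) (A (EuclideanSpace.single j 1))

/-- matrix of `A ⊗ 1`: an operator `A` on `W`, extended by the identity on the `DB` factor -/
def uExtMat (X Y : Type*) [Fintype X] [DecidableEq X] [Fintype Y] [DecidableEq Y]
    (k d : ℕ)
    (A : EuclideanSpace ℂ ((Fin k → X) × (Fin k → Y) × Fin d) →L[ℂ]
         EuclideanSpace ℂ ((Fin k → X) × (Fin k → Y) × Fin d)) :
    Matrix (((Fin k → X) × (Fin k → Y) × Fin d) × (X → Option Y))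
           (((Fin k → X) × (Fin k → Y) × Fin d) × (X → Option Y)) ℂ := by
  classical
  exact Matrix.of fun p' p => if p'.2 = p.2 then matOf A p'.1 p.1 else 0

/-- the (continuous linear) operator on `ℓ²` given by a matrix -/
def toOp {ι : Type*} [Fintype ι] [DecidableEq ι] (m : Matrix ι ι ℂ) :
    EuclideanSpace ℂ ι →L[ℂ] EuclideanSpace ℂ ι :=
  LinearMap.toContinuousLinearMap (Matrix.toEuclideanLin m)

/-- `ψ₀ ⊗ e_⊥̄`, where `⊥̄` is the constant-`⊥` database -/
def tensorBot {B X Y : Type*} [Fintype B] [Fintype X] [Fintype Y]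
    (ψ0 : EuclideanSpace ℂ B) :
    EuclideanSpace ℂ (B × (X → Option Y)) := by
  classical
  exact (EuclideanSpace.equiv (B × (X → Option Y)) ℂ).symm
    (fun p => if p.2 = (fun _ => none) then (EuclideanSpace.equiv B ℂ) ψ0 p.1 else 0)

/-- `runOp Us O q = Us q ∘ O ∘ Us (q-1) ∘ O ∘ ⋯ ∘ Us 1 ∘ O ∘ Us 0`:
the evolution of a `q`-query oracle algorithm with unitaries `Us` and oracle `O` -/
def runOp {V : Type*} [NormedAddCommGroup V] [NormedSpace ℂ V]
    (Us : ℕ → V →L[ℂ] V) (O : V →L[ℂ] V) : ℕ → (V →L[ℂ] V)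
  | 0 => Us 0
  | n + 1 => (Us (n + 1)).comp (O.comp (runOp Us O n))

section
open Matrix
open scoped Matrix.Norms.L2Operator

/-- the tensor product, over all registers, of the matrices `m a` -/
def registerTensor {X ι : Type*} [Fintype X] (m : X → Matrix ι ι ℂ) :
    Matrix (X → ι) (X → ι) ℂ :=
  Matrix.of fun D' D => ∏ a, m a (D' a) (D a)

section registerTensor
variable {X ι : Type*} [Fintype X]

lemma registerTensor_mul [DecidableEq X] [Fintype ι] (m n : X → Matrix ι ι ℂ) :
    registerTensor m * registerTensor n = registerTensor fun a => m a * n a := by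
  ext D' D
  simp only [registerTensor, Matrix.mul_apply, Matrix.of_apply, ← Finset.prod_mul_distrib]
  rw [Finset.prod_univ_sum, Fintype.piFinset_univ]

lemma registerTensor_conjTranspose (m : X → Matrix ι ι ℂ) :
    (registerTensor m)ᴴ = registerTensor fun a => (m a)ᴴ := by
  ext D' D
  simp [registerTensor, Matrix.conjTranspose_apply]

lemma registerTensor_diagonal [DecidableEq ι] (f : X → ι → ℂ) :
    registerTensor (fun a => Matrix.diagonal (f a)) =
      Matrix.diagonal fun D : X → ι => ∏ a, f a (D a) := by
  ext D' D
  rw [Matrix.diagonal_apply]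
  split_ifs with h
  · subst h
    simp [registerTensor]
  · obtain ⟨a, ha⟩ := Function.ne_iff.1 h
    exact Finset.prod_eq_zero (Finset.mem_univ a) (Matrix.diagonal_apply_ne _ ha)

lemma registerTensor_one [DecidableEq ι] :
    registerTensor (fun _ : X => (1 : Matrix ι ι ℂ)) = 1 := by
  simp_rw [← Matrix.diagonal_one, registerTensor_diagonal]
  simp

lemma registerTensor_smul (c : X → ℂ) (m : X → Matrix ι ι ℂ) :
    registerTensor (fun a => c a • m a) = (∏ a, c a) • registerTensor m := by
  ext D' D
  simp [registerTensor, Finset.prod_mul_distrib]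

end registerTensor

lemma inv_sqrt_card_mul_self {Y : Type*} [Fintype Y] :
    ((Real.sqrt (Fintype.card Y) : ℝ) : ℂ)⁻¹ * ((Real.sqrt (Fintype.card Y) : ℝ) : ℂ)⁻¹ =
      ((Fintype.card Y : ℕ) : ℂ)⁻¹ := by
  rw [← mul_inv, ← Complex.ofReal_mul, Real.mul_self_sqrt (Nat.cast_nonneg _),
    Complex.ofReal_natCast]

section registerProj
variable {Y : Type*} [DecidableEq Y]

/-- the projector of one register onto the non-`⊥` values -/
def valueProj (Y : Type*) [DecidableEq Y] : Matrix (Option Y) (Option Y) ℂ :=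
  Matrix.diagonal fun u => u.elim 0 fun _ => 1

/-- the projector of one register onto the prescribed value `o`; no constraint if `o = ⊥` -/
def constraintProj (o : Option Y) : Matrix (Option Y) (Option Y) ℂ :=
  Matrix.diagonal fun u => o.elim 1 fun y => if u = some y then 1 else 0

lemma valueProj_conjTranspose : (valueProj Y)ᴴ = valueProj Y := by
  rw [valueProj, Matrix.diagonal_conjTranspose]
  congr 1
  ext u
  cases u <;> simp

lemma constraintProj_conjTranspose (o : Option Y) :
    (constraintProj o)ᴴ = constraintProj o := by
  rw [constraintProj, Matrix.diagonal_conjTranspose]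
  congr 1
  ext u
  cases o <;> simp [apply_ite]

lemma constraintProj_none : constraintProj (none : Option Y) = 1 := by
  simp [constraintProj]

end registerProj

section compMat
variable {Y : Type*} [Fintype Y] [DecidableEq Y]

lemma compMat_conjTranspose : (compMat Y)ᴴ = compMat Y := by
  ext u v
  rcases u with _ | u <;> rcases v with _ | v <;>
    simp [compMat, Matrix.conjTranspose_apply, eq_comm]

lemma compMat_mul_self [Nonempty Y] : compMat Y * compMat Y = 1 := by
  have hM : ((Fintype.card Y : ℕ) : ℂ) ≠ 0 := Nat.cast_ne_zero.2 Fintype.card_ne_zero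
  have h := inv_sqrt_card_mul_self (Y := Y)
  ext u v
  rw [Matrix.mul_apply, Fintype.sum_option]
  rcases u with _ | u <;> rcases v with _ | v
  · simp [compMat, h, hM]
  · simp only [compMat, Matrix.of_apply, zero_mul, zero_add, mul_sub, Finset.sum_sub_distrib]
    simp [mul_left_comm ((Fintype.card Y : ℕ) : ℂ), hM]
  · simp [compMat, sub_mul, hM]
  · simp only [compMat, Matrix.of_apply, h, sub_mul, mul_sub, Finset.sum_sub_distrib]
    simp [Matrix.one_apply, hM]

/-- the weight `1 - 1/M` of a constrained register, and `1` for an unconstrained one -/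
def constraintWeight (o : Option Y) : ℝ := o.elim 1 fun _ => 1 - (Fintype.card Y : ℝ)⁻¹

lemma valueProj_mul_self : valueProj Y * valueProj Y = valueProj Y := by
  rw [valueProj, Matrix.diagonal_mul_diagonal]
  congr 1
  ext u
  cases u <;> simp

lemma constraintProj_mul_self (o : Option Y) :
    constraintProj o * constraintProj o = constraintProj o := by
  rw [constraintProj, Matrix.diagonal_mul_diagonal]
  congr 1
  ext u
  cases o <;> simp

lemma constraintProj_mul_mul_self (y : Y) (A : Matrix (Option Y) (Option Y) ℂ) :
    constraintProj (some y) * A * constraintProj (some y) =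
      A (some y) (some y) • constraintProj (some y) := by
  ext u v
  rw [constraintProj, Matrix.mul_diagonal, Matrix.diagonal_mul, Matrix.smul_apply,
    Matrix.diagonal_apply]
  by_cases hu : u = some y <;> by_cases hv : v = some y
  · subst hu; subst hv; simp
  · subst hu; simp [hv, Ne.symm hv]
  · simp [hu]
  · simp [hu]

lemma compMat_valueProj_compMat_some [Nonempty Y] (y : Y) :
    (compMat Y * valueProj Y * compMat Y) (some y) (some y) = 1 - ((Fintype.card Y : ℕ) : ℂ)⁻¹ := by
  have h := congrFun (congrFun (compMat_mul_self (Y := Y)) (some y)) (some y)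
  rw [Matrix.mul_apply, Fintype.sum_option, Matrix.one_apply_eq] at h
  rw [Matrix.mul_apply, Fintype.sum_option]
  simp only [valueProj, Matrix.mul_diagonal, Option.elim, mul_zero, zero_mul, zero_add, mul_one]
  rw [← h, ← inv_sqrt_card_mul_self]
  simp [compMat]

/-- `Comp` on unconstrained registers, the projector onto the prescribed value elsewhere -/
def partialCompProj (o : Option Y) : Matrix (Option Y) (Option Y) ℂ :=
  o.elim (compMat Y) fun y => constraintProj (some y)

/-- `Comp` on unconstrained registers, the identity elsewhere -/
def partialComp (o : Option Y) : Matrix (Option Y) (Option Y) ℂ :=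
  o.elim (compMat Y) fun _ => 1

/-- the projector onto the common range of `partialCompProj` and `constraintProj * Comp`,
restricted to registers holding a value -/
def residualProj (o : Option Y) : Matrix (Option Y) (Option Y) ℂ :=
  o.elim (compMat Y * valueProj Y * compMat Y) fun y => constraintProj (some y)

lemma residualProj_isStarProjection [Nonempty Y] (o : Option Y) :
    residualProj o * residualProj o = residualProj o ∧ (residualProj o)ᴴ = residualProj o := by
  cases o with
  | none =>
    constructor
    · simp only [residualProj, Option.elim]
      calc compMat Y * valueProj Y * compMat Y * (compMat Y * valueProj Y * compMat Y)
          = compMat Y * (valueProj Y * (compMat Y * compMat Y) * valueProj Y) * compMat Y := by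
            simp only [Matrix.mul_assoc]
        _ = _ := by rw [compMat_mul_self, Matrix.mul_one, valueProj_mul_self]
    · simp [residualProj, Matrix.conjTranspose_mul, compMat_conjTranspose,
        valueProj_conjTranspose, Matrix.mul_assoc]
  | some y => exact ⟨constraintProj_mul_self _, constraintProj_conjTranspose _⟩

lemma valueProj_constraintProj (y : Y) :
    valueProj Y * constraintProj (some y) = constraintProj (some y) := by
  rw [valueProj, constraintProj, Matrix.diagonal_mul_diagonal]
  congr 1
  ext u
  cases u <;> simp

lemma partialCompProj_gram [Nonempty Y] (o : Option Y) :
    partialCompProj o * valueProj Y * (partialCompProj o)ᴴ = residualProj o := by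
  cases o with
  | none => simp [partialCompProj, residualProj, compMat_conjTranspose]
  | some y =>
    simp only [partialCompProj, residualProj, Option.elim, constraintProj_conjTranspose,
      Matrix.mul_assoc, valueProj_constraintProj, constraintProj_mul_self]

lemma constraint_comp_gram [Nonempty Y] (o : Option Y) :
    constraintProj o * compMat Y * valueProj Y * (constraintProj o * compMat Y)ᴴ =
      (constraintWeight o : ℂ) • residualProj o := by
  rw [Matrix.conjTranspose_mul, compMat_conjTranspose, constraintProj_conjTranspose]
  cases o with
  | none => simp [constraintProj_none, residualProj, constraintWeight, Matrix.mul_assoc]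
  | some y =>
    have h := constraintProj_mul_mul_self y (compMat Y * valueProj Y * compMat Y)
    rw [compMat_valueProj_compMat_some] at h
    simpa [residualProj, constraintWeight, Matrix.mul_assoc] using h

lemma constraint_comp_partialCompProj [Nonempty Y] (o : Option Y) :
    constraintProj o * compMat Y * valueProj Y * (partialCompProj o)ᴴ =
      (constraintWeight o : ℂ) • residualProj o := by
  cases o with
  | none =>
    simp [constraintProj_none, residualProj, constraintWeight, partialCompProj,
      compMat_conjTranspose]
  | some y =>
    have h := constraintProj_mul_mul_self y (compMat Y)
    simp only [partialCompProj, Option.elim, constraintProj_conjTranspose]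
    rw [Matrix.mul_assoc, valueProj_constraintProj, h]
    simp [residualProj, constraintWeight, compMat]

lemma partialComp_mul_self [Nonempty Y] (o : Option Y) : partialComp o * partialComp o = 1 := by
  cases o <;> simp [partialComp, compMat_mul_self]

lemma partialComp_conjTranspose (o : Option Y) : (partialComp o)ᴴ = partialComp o := by
  cases o <;> simp [partialComp, compMat_conjTranspose]

lemma partialComp_mul_constraintProj (o : Option Y) :
    partialComp o * constraintProj o = partialCompProj o := by
  cases o <;> simp [partialComp, partialCompProj, constraintProj_none]

end compMat

lemma l2_opNorm_le_one_of_conjTranspose_mul_self {ι : Type*} [Fintype ι] [DecidableEq ι]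
    {A : Matrix ι ι ℂ} (h : Aᴴ * A = A ∨ Aᴴ * A = 1) : ‖A‖ ≤ 1 := by
  have h1 := Matrix.l2_opNorm_conjTranspose_mul_self A
  rcases h with h | h
  · rw [h] at h1
    by_contra! h2
    nlinarith
  · rw [h, ← pow_two] at h1
    have h2 : ‖(1 : Matrix ι ι ℂ)‖ ≤ 1 := by
      rcases isEmpty_or_nonempty ι with hi | hi
      · simp [Subsingleton.elim (1 : Matrix ι ι ℂ) 0]
      · exact le_of_eq (CStarRing.norm_one)
    nlinarith [norm_nonneg A]

lemma norm_toLp_mulVec_le {ι : Type*} [Fintype ι] [DecidableEq ι]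
    (A : Matrix ι ι ℂ) (v : ι → ℂ) :
    ‖WithLp.toLp 2 (A *ᵥ v)‖ ≤ ‖A‖ * ‖WithLp.toLp 2 v‖ :=
  Matrix.l2_opNorm_mulVec A (WithLp.toLp 2 v)

section residual
variable {X Y : Type*} [Fintype X] [DecidableEq X] [Fintype Y] [DecidableEq Y] [Nonempty Y]

lemma norm_partialCompProj_sub_le (τ : X → Option Y) :
    ‖(registerTensor (fun a => partialCompProj (τ a)) -
        registerTensor (fun a => constraintProj (τ a) * compMat Y)) *
        registerTensor fun _ : X => valueProj Y‖ ≤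
      Real.sqrt (1 - ∏ a, constraintWeight (τ a)) := by
  set F := registerTensor (fun a => partialCompProj (τ a)) with hF
  set G := registerTensor (fun a => constraintProj (τ a) * compMat Y) with hG
  set J := registerTensor (fun _ : X => valueProj Y) with hJ
  set T := registerTensor (fun a => residualProj (τ a)) with hT
  set c : ℝ := ∏ a, constraintWeight (τ a) with hc
  have hJJ : J * Jᴴ = J := by
    simp only [hJ, registerTensor_conjTranspose, registerTensor_mul, valueProj_conjTranspose,
      valueProj_mul_self]
  have hTT : T * T = T := by
    simp only [hT, registerTensor_mul, (residualProj_isStarProjection _).1]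
  have hTs : Tᴴ = T := by
    simp only [hT, registerTensor_conjTranspose, (residualProj_isStarProjection _).2]
  have hFF : F * J * Fᴴ = T := by
    simp only [hF, hJ, hT, registerTensor_conjTranspose, registerTensor_mul, partialCompProj_gram]
  have hGG : G * J * Gᴴ = (c : ℂ) • T := by
    simp only [hG, hJ, hT, hc, registerTensor_conjTranspose, registerTensor_mul,
      constraint_comp_gram, registerTensor_smul, Complex.ofReal_prod]
  have hGF : G * J * Fᴴ = (c : ℂ) • T := by
    simp only [hF, hG, hJ, hT, hc, registerTensor_conjTranspose, registerTensor_mul,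
      constraint_comp_partialCompProj, registerTensor_smul, Complex.ofReal_prod]
  have hJs : Jᴴ = J := by
    simp only [hJ, registerTensor_conjTranspose, valueProj_conjTranspose]
  have hFG : F * J * Gᴴ = (c : ℂ) • T := by
    have := congrArg Matrix.conjTranspose hGF
    simpa [Matrix.conjTranspose_mul, Matrix.conjTranspose_smul, hTs, hJs, Matrix.mul_assoc]
      using this
  have hgram : ((F - G) * J) * ((F - G) * J)ᴴ = ((1 - c : ℝ) : ℂ) • T := by
    calc ((F - G) * J) * ((F - G) * J)ᴴ
        = F * (J * Jᴴ) * Fᴴ - F * (J * Jᴴ) * Gᴴ - (G * (J * Jᴴ) * Fᴴ - G * (J * Jᴴ) * Gᴴ) := by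
          rw [Matrix.conjTranspose_mul, Matrix.conjTranspose_sub]
          noncomm_ring
      _ = ((1 - c : ℝ) : ℂ) • T := by
          rw [hJJ, hFF, hGG, hGF, hFG, sub_self, sub_zero]
          push_cast
          rw [sub_smul, one_smul]
  have hw : ∀ a, 0 ≤ constraintWeight (τ a) ∧ constraintWeight (τ a) ≤ 1 := by
    intro a
    cases τ a with
    | none => simp [constraintWeight]
    | some y =>
      have : (1 : ℝ) ≤ Fintype.card Y := Nat.one_le_cast.2 Fintype.card_pos
      simp [constraintWeight, inv_le_one_of_one_le₀ this]
  have hc1 : 0 ≤ 1 - c :=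
    sub_nonneg.2 (Finset.prod_le_one (fun a _ => (hw a).1) fun a _ => (hw a).2)
  have hTn : ‖T‖ ≤ 1 :=
    l2_opNorm_le_one_of_conjTranspose_mul_self (Or.inl (by rw [hTs, hTT]))
  apply Real.le_sqrt_of_sq_le
  rw [pow_two, ← Matrix.l2_opNorm_conjTranspose ((F - G) * J),
    ← Matrix.l2_opNorm_conjTranspose_mul_self, Matrix.conjTranspose_conjTranspose, hgram,
    norm_smul, Complex.norm_real, Real.norm_of_nonneg hc1]
  exact mul_le_of_le_one_right hc1 hTn

lemma norm_constraintProj_mulVec_le (τ : X → Option Y) (v : (X → Option Y) → ℂ)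
    (hv : (registerTensor fun _ : X => valueProj Y) *ᵥ v = v) :
    ‖WithLp.toLp 2 ((registerTensor fun a => constraintProj (τ a)) *ᵥ v)‖ ≤
      ‖WithLp.toLp 2 ((registerTensor fun a => constraintProj (τ a)) *ᵥ
        (compDBMat X Y *ᵥ v))‖ +
        Real.sqrt (1 - ∏ a, constraintWeight (τ a)) * ‖WithLp.toLp 2 v‖ := by
  set Q := registerTensor (fun a => constraintProj (τ a)) with hQ
  set W := registerTensor (fun a => partialComp (τ a)) with hW
  set F := registerTensor (fun a => partialCompProj (τ a)) with hF
  set G := registerTensor (fun a => constraintProj (τ a) * compMat Y) with hG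
  set J := registerTensor (fun _ : X => valueProj Y) with hJ
  have hWQ : W * Q = F := by
    simp only [hW, hQ, hF, registerTensor_mul, partialComp_mul_constraintProj]
  have hWW : W * W = 1 := by
    simp only [hW, registerTensor_mul, partialComp_mul_self, registerTensor_one]
  have hWs : Wᴴ = W := by
    simp only [hW, registerTensor_conjTranspose, partialComp_conjTranspose]
  have hQC : Q * compDBMat X Y = G :=
    registerTensor_mul _ _
  have hWn : ‖W‖ ≤ 1 :=
    l2_opNorm_le_one_of_conjTranspose_mul_self (Or.inr (by rw [hWs, hWW]))
  have hQF : Q *ᵥ v = W *ᵥ (F *ᵥ v) := by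
    rw [← hWQ, Matrix.mulVec_mulVec, ← Matrix.mul_assoc, hWW, Matrix.one_mul]
  have hsplit : F *ᵥ v = G *ᵥ v + ((F - G) * J) *ᵥ v := by
    rw [← Matrix.mulVec_mulVec, hv, Matrix.sub_mulVec]
    abel
  calc ‖WithLp.toLp 2 (Q *ᵥ v)‖ ≤ ‖W‖ * ‖WithLp.toLp 2 (F *ᵥ v)‖ := by
        rw [hQF]
        exact norm_toLp_mulVec_le _ _
    _ ≤ ‖WithLp.toLp 2 (F *ᵥ v)‖ := mul_le_of_le_one_left (norm_nonneg _) hWn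
    _ ≤ ‖WithLp.toLp 2 (G *ᵥ v)‖ + ‖WithLp.toLp 2 (((F - G) * J) *ᵥ v)‖ := by
        rw [hsplit, WithLp.toLp_add]
        exact norm_add_le _ _
    _ ≤ _ := by
        rw [Matrix.mulVec_mulVec, hQC]
        gcongr
        exact (norm_toLp_mulVec_le _ _).trans
          (mul_le_mul_of_nonneg_right (norm_partialCompProj_sub_le τ) (norm_nonneg _))

end residual
end

lemma toOp_toLp {ι : Type*} [Fintype ι] [DecidableEq ι] (m : Matrix ι ι ℂ) (v : ι → ℂ) :
    toOp m (WithLp.toLp 2 v) = WithLp.toLp 2 (m.mulVec v) := rfl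

lemma apply_eq_matOf_mulVec {ι : Type*} [Fintype ι] [DecidableEq ι]
    (A : EuclideanSpace ℂ ι →L[ℂ] EuclideanSpace ℂ ι) (w : EuclideanSpace ℂ ι) (i : ι) :
    A w i = ∑ j, matOf A i j * w j := by
  conv_lhs => rw [← (EuclideanSpace.basisFun ι ℂ).sum_repr w]
  simp [matOf, EuclideanSpace.inner_single_left, mul_comm]

lemma some_comp_injective {X Y : Type*} :
    Function.Injective fun (H : X → Y) (a : X) => some (H a) :=
  fun _ _ h => funext fun a => Option.some_injective _ (congrFun h a)

lemma norm_liftState_coeff_sq {X Y : Type*} [Fintype X] [Fintype Y] (z : ℂ) :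
    ‖((Real.sqrt (Fintype.card Y) : ℝ) : ℂ)⁻¹ ^ Fintype.card X * z‖ ^ 2 =
      ‖z‖ ^ 2 / (Fintype.card Y : ℝ) ^ Fintype.card X := by
  rw [norm_mul, norm_pow, norm_inv, Complex.norm_real, Real.norm_of_nonneg (Real.sqrt_nonneg _),
    mul_pow, ← pow_mul, mul_comm (Fintype.card X), pow_mul, inv_pow,
    Real.sq_sqrt (Nat.cast_nonneg _), inv_pow]
  ring

section liftState
variable {B X Y : Type*} [Fintype X] [Fintype Y] [DecidableEq Y]

/-- the joint (uncompressed) state of algorithm and oracle, where the oracle register holds the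
uniform superposition of all functions `H` and the algorithm is in state `f H` -/
def liftState (f : (X → Y) → B → ℂ) (p : B × (X → Option Y)) : ℂ := by
  classical
  exact ∑ H : X → Y, if p.2 = (fun a => some (H a)) then
    ((Real.sqrt (Fintype.card Y) : ℝ) : ℂ)⁻¹ ^ Fintype.card X * f H p.1 else 0

lemma liftState_some (f : (X → Y) → B → ℂ) (b : B) (H : X → Y) :
    liftState f (b, fun a => some (H a)) =
      ((Real.sqrt (Fintype.card Y) : ℝ) : ℂ)⁻¹ ^ Fintype.card X * f H b := by
  classical
  rw [liftState, Fintype.sum_eq_single H fun H' h => if_neg fun h' => h ?_]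
  · exact if_pos rfl
  · exact (some_comp_injective h').symm

lemma liftState_eq_zero (f : (X → Y) → B → ℂ) (b : B) (D : X → Option Y)
    (hD : ∀ H : X → Y, D ≠ fun a => some (H a)) : liftState f (b, D) = 0 := by
  classical
  exact Finset.sum_eq_zero fun H _ => if_neg (hD H)

lemma sum_liftState [DecidableEq X] {E : Type*} [AddCommMonoid E]
    (f : (X → Y) → B → ℂ) (b : B) (g : (X → Option Y) → ℂ → E) (hg : ∀ D, g D 0 = 0) :
    ∑ D, g D (liftState f (b, D)) =
      ∑ H : X → Y, g (fun a => some (H a))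
        (((Real.sqrt (Fintype.card Y) : ℝ) : ℂ)⁻¹ ^ Fintype.card X * f H b) := by
  symm
  refine Fintype.sum_of_injective _ some_comp_injective _ _ (fun D hD => ?_) fun H => ?_
  · rw [liftState_eq_zero f b D fun H h => hD ⟨H, h.symm⟩, hg]
  · rw [liftState_some]

lemma valueProj_mulVec_liftState [DecidableEq X] (f : (X → Y) → B → ℂ) (b : B) :
    (registerTensor fun _ : X => valueProj Y).mulVec (fun D => liftState f (b, D)) =
      fun D => liftState f (b, D) := by
  simp only [valueProj]
  rw [registerTensor_diagonal]
  ext D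
  rw [Matrix.mulVec_diagonal]
  by_cases h : ∃ H : X → Y, D = fun a => some (H a)
  · obtain ⟨H, rfl⟩ := h
    simp
  · rw [liftState_eq_zero f b D fun H hH => h ⟨H, hH⟩, mul_zero]

end liftState

section compressed
variable {X Y : Type*} [Fintype X] [DecidableEq X] [Fintype Y] [DecidableEq Y]

lemma compDBMat_mul_self [Nonempty Y] : compDBMat X Y * compDBMat X Y = 1 := by
  change registerTensor _ * registerTensor _ = 1
  simp only [registerTensor_mul, compMat_mul_self, registerTensor_one]

/-- the image under `1 ⊗ Comp_DB` of a joint state of algorithm and oracle -/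
def compress {B : Type*} (g : B × (X → Option Y) → ℂ) (p : B × (X → Option Y)) : ℂ :=
  ((compDBMat X Y).mulVec fun D => g (p.1, D)) p.2

lemma compress_compress {B : Type*} [Nonempty Y] (g : B × (X → Option Y) → ℂ) :
    compress (compress g) = g := by
  ext ⟨b, D⟩
  change ((compDBMat X Y).mulVec ((compDBMat X Y).mulVec fun D => g (b, D))) D = _
  rw [Matrix.mulVec_mulVec, compDBMat_mul_self, Matrix.one_mulVec]

lemma tensorBot_eq_compress_liftState {B : Type*} [Fintype B] [Nonempty Y]
    (ψ0 : EuclideanSpace ℂ B) :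
    tensorBot (X := X) (Y := Y) ψ0 =
      WithLp.toLp 2 (compress (liftState fun _ => (ψ0 : B → ℂ))) := by
  have hcol : ∀ o : Option Y, ∑ y, compMat Y o (some y) *
      ((Real.sqrt (Fintype.card Y) : ℝ) : ℂ)⁻¹ = if o = none then 1 else 0 := by
    intro o
    have h := congrFun (congrFun (compMat_mul_self (Y := Y)) o) none
    rw [Matrix.mul_apply, Fintype.sum_option, Matrix.one_apply] at h
    rw [← h]
    simp [compMat]
  ext ⟨b, D⟩
  have hl : tensorBot (X := X) (Y := Y) ψ0 (b, D) = if D = (fun _ => none) then ψ0 b else 0 := by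
    simp only [tensorBot]
    exact if_congr Iff.rfl rfl rfl
  rw [hl]
  change _ = ∑ D', compDBMat X Y D D' * liftState (fun _ => (ψ0 : B → ℂ)) (b, D')
  rw [sum_liftState (fun _ => (ψ0 : B → ℂ)) b (fun D' z => compDBMat X Y D D' * z)
    fun _ => mul_zero _]
  have hprod : ∀ H : X → Y, compDBMat X Y D (fun a => some (H a)) *
      (((Real.sqrt (Fintype.card Y) : ℝ) : ℂ)⁻¹ ^ Fintype.card X * ψ0 b) =
      (∏ a, compMat Y (D a) (some (H a)) * ((Real.sqrt (Fintype.card Y) : ℝ) : ℂ)⁻¹) * ψ0 b := by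
    intro H
    rw [Finset.prod_mul_distrib, Finset.prod_const, Finset.card_univ, mul_assoc]
    rfl
  simp_rw [hprod]
  rw [← Finset.sum_mul, ← Fintype.piFinset_univ,
    ← Finset.prod_univ_sum (fun _ => Finset.univ)
      (fun a y => compMat Y (D a) (some y) * ((Real.sqrt (Fintype.card Y) : ℝ) : ℂ)⁻¹)]
  simp_rw [hcol]
  rw [Finset.prod_ite_zero]
  simp [funext_iff]

lemma uExtMat_mulVec_compress_liftState {k d : ℕ}
    (A : EuclideanSpace ℂ ((Fin k → X) × (Fin k → Y) × Fin d) →L[ℂ]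
         EuclideanSpace ℂ ((Fin k → X) × (Fin k → Y) × Fin d))
    (f : (X → Y) → EuclideanSpace ℂ ((Fin k → X) × (Fin k → Y) × Fin d)) :
    (uExtMat X Y k d A).mulVec (compress (liftState fun H b => f H b)) =
      compress (liftState fun H b => A (f H) b) := by
  ext ⟨b, D⟩
  have h1 : ∀ g : ((Fin k → X) × (Fin k → Y) × Fin d) × (X → Option Y) → ℂ,
      (uExtMat X Y k d A).mulVec g (b, D) = ∑ b', matOf A b b' * g (b', D) := by
    intro g
    simp [Matrix.mulVec, dotProduct, uExtMat, Fintype.sum_prod_type, ite_mul]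
  have h2 : ∀ D', liftState (fun H b => A (f H) b) (b, D') =
      ∑ b', matOf A b b' * liftState (fun H b => f H b) (b', D') := by
    intro D'
    simp only [liftState, apply_eq_matOf_mulVec, Finset.mul_sum]
    rw [Finset.sum_comm]
    refine Finset.sum_congr rfl fun H _ => ?_
    split_ifs
    · exact Finset.sum_congr rfl fun _ _ => mul_left_comm _ _ _
    · simp
  rw [h1]
  simp only [compress, Matrix.mulVec, dotProduct, h2, Finset.mul_sum]
  rw [Finset.sum_comm]
  exact Finset.sum_congr rfl fun _ _ => Finset.sum_congr rfl fun _ _ => mul_left_comm _ _ _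

/-- the inverse of the permutation of basis labels underlying `O_H` -/
def oracleUnshift [AddCommGroup Y] {k d : ℕ} (H : X → Y) :
    (Fin k → X) × (Fin k → Y) × Fin d ≃ (Fin k → X) × (Fin k → Y) × Fin d where
  toFun b := (b.1, fun i => b.2.1 i - H (b.1 i), b.2.2)
  invFun b := (b.1, fun i => b.2.1 i + H (b.1 i), b.2.2)
  left_inv b := by simp
  right_inv b := by simp

lemma oracle_apply [AddCommGroup Y] {k d : ℕ} (H : X → Y)
    (A : EuclideanSpace ℂ ((Fin k → X) × (Fin k → Y) × Fin d) →L[ℂ]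
        EuclideanSpace ℂ ((Fin k → X) × (Fin k → Y) × Fin d))
    (hA : ∀ (x : Fin k → X) (y : Fin k → Y) (wr : Fin d),
      A (EuclideanSpace.single (x, y, wr) 1) =
        EuclideanSpace.single (x, fun i => y i + H (x i), wr) 1)
    (w : EuclideanSpace ℂ ((Fin k → X) × (Fin k → Y) × Fin d))
    (b : (Fin k → X) × (Fin k → Y) × Fin d) :
    A w b = w (oracleUnshift H b) := by
  have hm : ∀ b', matOf A b b' = if b' = oracleUnshift H b then 1 else 0 := by
    rintro ⟨x, y, wr⟩
    have : b = (x, fun i => y i + H (x i), wr) ↔ (x, y, wr) = oracleUnshift H b := by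
      rw [← Equiv.symm_apply_eq, eq_comm]
      rfl
    simp only [matOf, Matrix.of_apply, hA, EuclideanSpace.inner_single_left, map_one, one_mul,
      PiLp.single_apply, this]
  rw [apply_eq_matOf_mulVec]
  simp [hm]

lemma norm_oracle [AddCommGroup Y] {k d : ℕ} (H : X → Y)
    (A : EuclideanSpace ℂ ((Fin k → X) × (Fin k → Y) × Fin d) →L[ℂ]
        EuclideanSpace ℂ ((Fin k → X) × (Fin k → Y) × Fin d))
    (hA : ∀ (x : Fin k → X) (y : Fin k → Y) (wr : Fin d),
      A (EuclideanSpace.single (x, y, wr) 1) =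
        EuclideanSpace.single (x, fun i => y i + H (x i), wr) 1)
    (w : EuclideanSpace ℂ ((Fin k → X) × (Fin k → Y) × Fin d)) :
    ‖A w‖ = ‖w‖ := by
  rw [EuclideanSpace.norm_eq, EuclideanSpace.norm_eq]
  simp_rw [oracle_apply H A hA]
  rw [Equiv.sum_comp (oracleUnshift H) fun b => ‖w b‖ ^ 2]

lemma cOMat_mulVec_compress_liftState [AddCommGroup Y] {k d : ℕ}
    (O : (X → Y) → (EuclideanSpace ℂ ((Fin k → X) × (Fin k → Y) × Fin d) →L[ℂ]
        EuclideanSpace ℂ ((Fin k → X) × (Fin k → Y) × Fin d)))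
    (hO : ∀ (H : X → Y) (x : Fin k → X) (y : Fin k → Y) (wr : Fin d),
      O H (EuclideanSpace.single (x, y, wr) 1) =
        EuclideanSpace.single (x, fun i => y i + H (x i), wr) 1)
    (f : (X → Y) → EuclideanSpace ℂ ((Fin k → X) × (Fin k → Y) × Fin d)) :
    (cOMat X Y k d).mulVec (compress (liftState fun H b => f H b)) =
      compress (liftState fun H b => O H (f H) b) := by
  classical
  have hC : ∀ g : ((Fin k → X) × (Fin k → Y) × Fin d) × (X → Option Y) → ℂ,
      (Matrix.of fun p' p : ((Fin k → X) × (Fin k → Y) × Fin d) × (X → Option Y) =>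
        if p'.1 = p.1 then compDBMat X Y p'.2 p.2 else 0).mulVec g = compress g := by
    intro g
    ext ⟨b, D⟩
    simp only [Matrix.mulVec, dotProduct, compress, Matrix.of_apply, ite_mul, zero_mul]
    rw [Fintype.sum_prod_type, Fintype.sum_eq_single b]
    · simp
    · intro b' hb'
      simp [Ne.symm hb']
  have hS : (Matrix.of fun p' p : ((Fin k → X) × (Fin k → Y) × Fin d) × (X → Option Y) =>
        if p' = shiftIdx p then (1 : ℂ) else 0).mulVec (liftState fun H b => f H b) =
      liftState fun H b => O H (f H) b := by
    ext ⟨b, D⟩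
    simp only [Matrix.mulVec, dotProduct, Matrix.of_apply, ite_mul, one_mul, zero_mul]
    have hD : ∀ p : ((Fin k → X) × (Fin k → Y) × Fin d) × (X → Option Y),
        (b, D) = shiftIdx p → D = p.2 := fun p h => congrArg Prod.snd h
    by_cases hH : ∃ H : X → Y, D = fun a => some (H a)
    · obtain ⟨H, rfl⟩ := hH
      rw [liftState_some, oracle_apply H (O H) (hO H),
        Fintype.sum_eq_single (oracleUnshift H b, fun a => some (H a))]
      · rw [liftState_some, if_pos]
        exact Prod.ext ((oracleUnshift H).symm_apply_apply b).symm rfl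
      · rintro ⟨b', D'⟩ hne
        refine if_neg fun h => hne ?_
        obtain rfl := hD _ h
        have h' : b = (oracleUnshift H).symm b' := congrArg Prod.fst h
        rw [h', Equiv.apply_symm_apply]
    · rw [liftState_eq_zero _ b D fun H h => hH ⟨H, h⟩]
      refine Finset.sum_eq_zero fun p _ => ?_
      split_ifs with h
      · obtain rfl := hD _ h
        exact liftState_eq_zero _ _ _ fun H h => hH ⟨H, h⟩
      · rfl
  have hcO : cOMat X Y k d =
      (Matrix.of fun p' p => if p'.1 = p.1 then compDBMat X Y p'.2 p.2 else 0)
      * (Matrix.of fun p' p => if p' = shiftIdx p then 1 else 0)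
      * (Matrix.of fun p' p => if p'.1 = p.1 then compDBMat X Y p'.2 p.2 else 0) := by
    simp only [cOMat]
  rw [hcO, ← Matrix.mulVec_mulVec, ← Matrix.mulVec_mulVec, hC, hC, compress_compress, hS]

lemma runOp_compressed_eq [AddCommGroup Y] {k d : ℕ}
    (ψ0 : EuclideanSpace ℂ ((Fin k → X) × (Fin k → Y) × Fin d))
    (U : ℕ → (EuclideanSpace ℂ ((Fin k → X) × (Fin k → Y) × Fin d) →L[ℂ]
              EuclideanSpace ℂ ((Fin k → X) × (Fin k → Y) × Fin d)))
    (O : (X → Y) → (EuclideanSpace ℂ ((Fin k → X) × (Fin k → Y) × Fin d) →L[ℂ]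
        EuclideanSpace ℂ ((Fin k → X) × (Fin k → Y) × Fin d)))
    (hO : ∀ (H : X → Y) (x : Fin k → X) (y : Fin k → Y) (wr : Fin d),
      O H (EuclideanSpace.single (x, y, wr) 1) =
        EuclideanSpace.single (x, fun i => y i + H (x i), wr) 1) (n : ℕ) :
    runOp (fun n => toOp (uExtMat X Y k d (U n))) (toOp (cOMat X Y k d)) n (tensorBot ψ0) =
      WithLp.toLp 2 (compress (liftState fun H b => runOp U (O H) n ψ0 b)) := by
  induction n with
  | zero =>
    simp only [runOp]
    rw [tensorBot_eq_compress_liftState, toOp_toLp,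
      uExtMat_mulVec_compress_liftState (U 0) fun _ => ψ0]
  | succ n ih =>
    simp only [runOp, ContinuousLinearMap.comp_apply]
    rw [ih, toOp_toLp (cOMat X Y k d),
      cOMat_mulVec_compress_liftState O hO fun H => runOp U (O H) n ψ0, toOp_toLp,
      uExtMat_mulVec_compress_liftState (U (n + 1)) fun H =>
         O H (runOp U (O H) n ψ0)]

end compressed

lemma norm_runOp {V : Type*} [NormedAddCommGroup V] [NormedSpace ℂ V]
    (Us : ℕ → V →L[ℂ] V) (O : V →L[ℂ] V) (hO : ∀ w, ‖O w‖ = ‖w‖) (n : ℕ)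
    (hU : ∀ i ≤ n, ∀ w, ‖Us i w‖ = ‖w‖) (w : V) : ‖runOp Us O n w‖ = ‖w‖ := by
  induction n with
  | zero => exact hU 0 le_rfl w
  | succ n ih =>
    simp only [runOp, ContinuousLinearMap.comp_apply]
    rw [hU _ le_rfl, hO, ih fun i hi => hU i (hi.trans n.le_succ)]

lemma norm_apply_of_mem_unitary {V : Type*} [NormedAddCommGroup V] [InnerProductSpace ℂ V]
    [CompleteSpace V] {A : V →L[ℂ] V} (hA : A ∈ unitary (V →L[ℂ] V)) (w : V) :
    ‖A w‖ = ‖w‖ :=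
  ContinuousLinearMap.norm_map_of_mem_unitary hA w

lemma sqrt_sum_sq_le_add {B : Type*} [Fintype B] (α β γ : B → ℝ) (c : ℝ) (hc : 0 ≤ c)
    (hα : ∀ b, 0 ≤ α b) (h : ∀ b, α b ≤ β b + c * γ b) :
    Real.sqrt (∑ b, α b ^ 2) ≤
      Real.sqrt (∑ b, β b ^ 2) + c * Real.sqrt (∑ b, γ b ^ 2) := by
  have hn := norm_add_le (WithLp.toLp 2 β : EuclideanSpace ℝ B) (c • WithLp.toLp 2 γ)
  rw [norm_smul, Real.norm_of_nonneg hc, EuclideanSpace.norm_eq, EuclideanSpace.norm_eq,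
    EuclideanSpace.norm_eq] at hn
  simp only [PiLp.add_apply, PiLp.smul_apply, smul_eq_mul, Real.norm_eq_abs, sq_abs] at hn
  refine le_trans (Real.sqrt_le_sqrt (Finset.sum_le_sum fun b _ => ?_)) hn
  exact pow_le_pow_left₀ (hα b) (h b) 2

/-- the partial assignment `x i ↦ y i` -/
def readoutConstraint {X Y : Type*} {ℓ : ℕ} (x : Fin ℓ → X) (y : Fin ℓ → Y) : X → Option Y :=
  Function.extend x (fun i => some (y i)) fun _ => none

lemma prod_readoutConstraint {X Y E : Type*} [Fintype X] [CommMonoid E] {ℓ : ℕ}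
    {x : Fin ℓ → X} (hx : Function.Injective x) (y : Fin ℓ → Y) (g : X → Option Y → E)
    (hg : ∀ a, g a none = 1) :
    ∏ a, g a (readoutConstraint x y a) = ∏ i, g (x i) (some (y i)) := by
  symm
  refine Fintype.prod_of_injective x hx _ _ (fun a ha => ?_) fun i => ?_
  · rw [readoutConstraint, Function.extend_apply' _ _ _ ha, hg]
  · rw [readoutConstraint, hx.extend_apply]

lemma one_sub_prod_constraintWeight_le {X Y : Type*} [Fintype X] [Fintype Y] [Nonempty Y] {ℓ : ℕ}
    {x : Fin ℓ → X} (hx : Function.Injective x) (y : Fin ℓ → Y) :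
    1 - ∏ a, constraintWeight (readoutConstraint x y a) ≤ (ℓ : ℝ) / Fintype.card Y := by
  rw [prod_readoutConstraint hx y (fun _ o => constraintWeight o) fun _ => rfl]
  have hM : (Fintype.card Y : ℝ)⁻¹ ≤ 1 :=
    inv_le_one_of_one_le₀ (Nat.one_le_cast.2 Fintype.card_pos)
  have h := one_add_mul_le_pow (a := -(Fintype.card Y : ℝ)⁻¹) (by linarith) ℓ
  simp only [constraintWeight, Option.elim, Finset.prod_const, Finset.card_univ, Fintype.card_fin]
  rw [← sub_eq_add_neg] at h
  rw [div_eq_mul_inv]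
  linarith

section readout
variable {X Y : Type*} [Fintype X] [DecidableEq X] [Fintype Y] [DecidableEq Y] {ℓ : ℕ}

lemma norm_constraintProj_readout_sq {x : Fin ℓ → X} (hx : Function.Injective x) (y : Fin ℓ → Y)
    (v : (X → Option Y) → ℂ) :
    ‖WithLp.toLp 2
        ((registerTensor fun a => constraintProj (readoutConstraint x y a)).mulVec v)‖ ^ 2 =
      ∑ D, if ∀ i, D (x i) = some (y i) then ‖v D‖ ^ 2 else 0 := by
  rw [EuclideanSpace.norm_sq_eq]
  refine Finset.sum_congr rfl fun D _ => ?_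
  simp only [constraintProj]
  rw [registerTensor_diagonal, Matrix.mulVec_diagonal,
    prod_readoutConstraint hx y
      (fun a o => o.elim (1 : ℂ) fun y => if D a = some y then 1 else 0) fun _ => rfl]
  simp only [Option.elim]
  rw [Finset.prod_ite_zero]
  simp only [Finset.mem_univ, forall_const, Finset.prod_const_one]
  split_ifs <;> simp

end readout

open Classical in
theorem stmt_4 {X Y : Type*} [Fintype X] [DecidableEq X] [Nonempty X]
    [Fintype Y] [DecidableEq Y] [AddCommGroup Y]
    (ℓ : ℕ) (hℓ : 1 ≤ ℓ)
    -- a relation `R ⊆ X^ℓ × Y^ℓ`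
    (R : (Fin ℓ → X) → (Fin ℓ → Y) → Prop)
    (k q : ℕ) (hk : 1 ≤ k) (hq : 1 ≤ q)
    -- a `k`-parallel `q`-query quantum oracle algorithm `(d, ψ₀, U_0, …, U_q)`
    (d : ℕ) (hd : 1 ≤ d)
    (ψ0 : EuclideanSpace ℂ ((Fin k → X) × (Fin k → Y) × Fin d)) (hψ0 : ‖ψ0‖ = 1)
    (U : ℕ → (EuclideanSpace ℂ ((Fin k → X) × (Fin k → Y) × Fin d) →L[ℂ]
              EuclideanSpace ℂ ((Fin k → X) × (Fin k → Y) × Fin d)))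
    (hU : ∀ i ≤ q,
      U i ∈ unitary (EuclideanSpace ℂ ((Fin k → X) × (Fin k → Y) × Fin d) →L[ℂ]
        EuclideanSpace ℂ ((Fin k → X) × (Fin k → Y) × Fin d)))
    -- the oracle unitary `O_H`, permuting the basis by `(x, y, w) ↦ (x, y + H(x), w)`
    (O : (X → Y) → (EuclideanSpace ℂ ((Fin k → X) × (Fin k → Y) × Fin d) →L[ℂ]
        EuclideanSpace ℂ ((Fin k → X) × (Fin k → Y) × Fin d)))
    (hO : ∀ (H : X → Y) (x : Fin k → X) (y : Fin k → Y) (wr : Fin d),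
      O H (EuclideanSpace.single (x, y, wr) 1) =
        EuclideanSpace.single (x, fun i => y i + H (x i), wr) 1)
    -- readout functions, with pairwise distinct components of `outX b`
    (outX : ((Fin k → X) × (Fin k → Y) × Fin d) → Fin ℓ → X)
    (outY : ((Fin k → X) × (Fin k → Y) × Fin d) → Fin ℓ → Y)
    (houtX : ∀ b, Function.Injective (outX b)) :
    -- `√p ≤ √p' + √(ℓ/M)`
    Real.sqrt
      ((∑ H : X → Y, ∑ b : (Fin k → X) × (Fin k → Y) × Fin d,
          if (outY b = fun i => H (outX b i)) ∧ R (outX b) (outY b)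
          then ‖inner (𝕜 := ℂ) (EuclideanSpace.single b 1) (runOp U (O H) q ψ0)‖ ^ 2
          else 0) / (Fintype.card Y : ℝ) ^ (Fintype.card X))
      ≤ Real.sqrt
          (∑ b : (Fin k → X) × (Fin k → Y) × Fin d, ∑ D : X → Option Y,
            if (∀ i, D (outX b i) = some (outY b i)) ∧ R (outX b) (outY b)
            then ‖inner (𝕜 := ℂ) (EuclideanSpace.single (b, D) 1)
              (runOp (fun n => toOp (uExtMat X Y k d (U n))) (toOp (cOMat X Y k d)) q
                (tensorBot ψ0))‖ ^ 2
            else 0) +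
        Real.sqrt (ℓ / Fintype.card Y) := by
  set ψ : (X → Y) → ((Fin k → X) × (Fin k → Y) × Fin d) → ℂ :=
    fun H b => runOp U (O H) q ψ0 b with hψ
  have hψn : ∀ H, ∑ b, ‖ψ H b‖ ^ 2 = 1 := by
    intro H
    rw [← EuclideanSpace.norm_sq_eq (runOp U (O H) q ψ0),
      norm_runOp U (O H) (norm_oracle H (O H) (hO H)) q
        (fun i hi => norm_apply_of_mem_unitary (hU i hi)), hψ0, one_pow]
  have hp : (∑ H : X → Y, ∑ b : (Fin k → X) × (Fin k → Y) × Fin d,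
      if (outY b = fun i => H (outX b i)) ∧ R (outX b) (outY b)
      then ‖inner (𝕜 := ℂ) (EuclideanSpace.single b 1) (runOp U (O H) q ψ0)‖ ^ 2
      else 0) / (Fintype.card Y : ℝ) ^ (Fintype.card X) =
      ∑ b, (if R (outX b) (outY b) then
        ‖WithLp.toLp 2 ((registerTensor fun a =>
          constraintProj (readoutConstraint (outX b) (outY b) a)).mulVec
            fun D => liftState ψ (b, D))‖ else 0) ^ 2 := by
    rw [Finset.sum_comm, Finset.sum_div]
    refine Finset.sum_congr rfl fun b _ => ?_
    by_cases hR : R (outX b) (outY b)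
    · simp only [hR, and_true, if_true]
      rw [norm_constraintProj_readout_sq (houtX b),
        sum_liftState ψ b (fun D z => if ∀ i, D (outX b i) = some (outY b i) then ‖z‖ ^ 2 else 0)
          (by simp), Finset.sum_div]
      refine Finset.sum_congr rfl fun H _ => ?_
      simp only [norm_liftState_coeff_sq, Option.some_inj, funext_iff, ite_div, zero_div,
        EuclideanSpace.inner_single_left, map_one, one_mul, hψ, eq_comm]
    · simp [hR]
  have hp' : (∑ b : (Fin k → X) × (Fin k → Y) × Fin d, ∑ D : X → Option Y,
      if (∀ i, D (outX b i) = some (outY b i)) ∧ R (outX b) (outY b)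
      then ‖inner (𝕜 := ℂ) (EuclideanSpace.single (b, D) 1)
        (runOp (fun n => toOp (uExtMat X Y k d (U n))) (toOp (cOMat X Y k d)) q
          (tensorBot ψ0))‖ ^ 2
      else 0) =
      ∑ b, (if R (outX b) (outY b) then
        ‖WithLp.toLp 2 ((registerTensor fun a =>
          constraintProj (readoutConstraint (outX b) (outY b) a)).mulVec
            ((compDBMat X Y).mulVec fun D => liftState ψ (b, D)))‖ else 0) ^ 2 := by
    rw [runOp_compressed_eq ψ0 U O hO q]
    refine Finset.sum_congr rfl fun b _ => ?_
    by_cases hR : R (outX b) (outY b)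
    · simp only [hR, and_true, if_true]
      rw [norm_constraintProj_readout_sq (houtX b)]
      refine Finset.sum_congr rfl fun D _ => ?_
      simp only [EuclideanSpace.inner_single_left, map_one, one_mul]
      exact if_congr Iff.rfl rfl rfl
    · simp [hR]
  have hnorm : ∑ b, ‖WithLp.toLp 2 fun D => liftState ψ (b, D)‖ ^ 2 = 1 := by
    simp only [EuclideanSpace.norm_sq_eq]
    simp_rw [fun b => sum_liftState ψ b (fun _ z => ‖z‖ ^ 2) (by simp), norm_liftState_coeff_sq]
    rw [Finset.sum_comm]
    simp_rw [← Finset.sum_div, hψn]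
    rw [Finset.sum_const, Finset.card_univ, Fintype.card_fun, nsmul_one, Nat.cast_pow, div_self]
    exact pow_ne_zero _ (Nat.cast_ne_zero.2 Fintype.card_ne_zero)
  rw [hp, hp']
  refine (sqrt_sum_sq_le_add _
    (fun b => if R (outX b) (outY b) then
      ‖WithLp.toLp 2 ((registerTensor fun a =>
        constraintProj (readoutConstraint (outX b) (outY b) a)).mulVec
          ((compDBMat X Y).mulVec fun D => liftState ψ (b, D)))‖ else 0)
    (fun b => ‖WithLp.toLp 2 fun D => liftState ψ (b, D)‖)
    (Real.sqrt (ℓ / Fintype.card Y)) (Real.sqrt_nonneg _) (fun b => ?_) fun b => ?_).trans_eq ?_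
  · split_ifs <;> positivity
  · split_ifs
    · refine (norm_constraintProj_mulVec_le _ _ (valueProj_mulVec_liftState ψ b)).trans ?_
      gcongr
      exact one_sub_prod_constraintWeight_le (houtX b) (outY b)
    · positivity
  · rw [hnorm, Real.sqrt_one, mul_one]

end
end

section
/- Let ◁ ⊆ Y × X be a relation and T an integer with |{y ∈ Y : y ◁ x}| ≤ T for every x ∈ X, and let k, q ≥ 1. Consider any k-parallel q-query quantum oracle algorithm (d, ψ₀, U_0, …, U_q) together with an arbitrary readout function out : B → X^{q+2}. Let p := M^{−|X|} · Σ_{H : X→Y} Σ_{b ∈ B such that H(out(b)_i) ◁ out(b)_{i+1} for all 0 ≤ i ≤ q} |⟨e_b, ψ_H⟩|². Then p ≤ ( q·k·e·√(10·q·k·T/M) + e·(q+2)·√(10·T·(q+2)/M) + √((q+2)/M) )², where e is Euler's number. (In particular, the success probability of finding a (q+1)-chain x_0, x_1, …, x_{q+1} with H(x_i) ◁ x_{i+1} for all i using q k-parallel quantum queries is O(q³·k³·T/M).) -/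
noncomputable section

set_option linter.unusedSectionVars false

section ProductMatrix

open Matrix
open scoped Matrix.Norms.L2Operator

variable {ι o : Type*} [Fintype ι] [DecidableEq ι] [Fintype o] [DecidableEq o]

/-- The tensor product `⨂ z, L z` of a family of square matrices, as a matrix indexed by the
functions `ι → o`. -/
def piKron (L : ι → Matrix o o ℂ) : Matrix (ι → o) (ι → o) ℂ :=
  of fun a b => ∏ z, L z (a z) (b z)

theorem piKron_apply (L : ι → Matrix o o ℂ) (a b : ι → o) :
    piKron L a b = ∏ z, L z (a z) (b z) := rfl

theorem piKron_mul (L K : ι → Matrix o o ℂ) : piKron L * piKron K = piKron (L * K) := by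
  ext a b
  simp only [Matrix.mul_apply, piKron_apply, Pi.mul_apply, Fintype.prod_sum,
    Finset.prod_mul_distrib]

theorem piKron_diagonal (w : ι → o → ℂ) :
    piKron (fun z => diagonal (w z)) = diagonal fun a => ∏ z, w z (a z) := by
  ext a b
  rw [piKron_apply]
  by_cases h : a = b
  · subst h; simp
  · obtain ⟨z, hz⟩ := Function.ne_iff.mp h
    rw [diagonal_apply_ne _ h]
    exact Finset.prod_eq_zero (Finset.mem_univ z) (diagonal_apply_ne _ hz)

theorem piKron_one : piKron (1 : ι → Matrix o o ℂ) = 1 := by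
  have := piKron_diagonal (fun (_ : ι) (_ : o) => (1 : ℂ))
  simpa [← Pi.one_def] using this

theorem star_piKron (L : ι → Matrix o o ℂ) : star (piKron L) = piKron (star L) := by
  ext a b
  simp [piKron_apply]

theorem piKron_update_add (L : ι → Matrix o o ℂ) (z : ι) (A B : Matrix o o ℂ) :
    piKron (Function.update L z (A + B)) =
      piKron (Function.update L z A) + piKron (Function.update L z B) := by
  ext a b
  simp only [piKron_apply, Matrix.add_apply,
    ← Finset.mul_prod_erase _ _ (Finset.mem_univ z), Function.update_self, add_mul]
  congr 2 <;> refine Finset.prod_congr rfl fun x hx => ?_ <;>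
    simp [Function.update_of_ne (Finset.ne_of_mem_erase hx)]

theorem piKron_update_smul (L : ι → Matrix o o ℂ) (z : ι) (c : ℂ) (A : Matrix o o ℂ) :
    piKron (Function.update L z (c • A)) = c • piKron (Function.update L z A) := by
  ext a b
  simp only [piKron_apply, Matrix.smul_apply, smul_eq_mul,
    ← Finset.mul_prod_erase _ _ (Finset.mem_univ z), Function.update_self, mul_assoc]
  congr 2
  refine Finset.prod_congr rfl fun x hx => ?_
  simp [Function.update_of_ne (Finset.ne_of_mem_erase hx)]

/-- The matrix acting as `A` on the tensor factor `z` and trivially on all the others. -/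
def singleKron (z : ι) : Matrix o o ℂ →⋆ₐ[ℂ] Matrix (ι → o) (ι → o) ℂ where
  toFun A := piKron (Function.update 1 z A)
  map_one' := by rw [show (1 : Matrix o o ℂ) = (1 : ι → Matrix o o ℂ) z from rfl,
    Function.update_eq_self, piKron_one]
  map_mul' A B := by rw [piKron_mul, ← Function.update_mul, one_mul]
  map_zero' := by simpa using piKron_update_smul 1 z 0 (0 : Matrix o o ℂ)
  map_add' := piKron_update_add 1 z
  commutes' c := by
    rw [Algebra.algebraMap_eq_smul_one, piKron_update_smul,
      show (1 : Matrix o o ℂ) = (1 : ι → Matrix o o ℂ) z from rfl,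
      Function.update_eq_self, piKron_one, Algebra.algebraMap_eq_smul_one]
  map_star' A := by rw [star_piKron, ← Function.update_star, star_one]

theorem norm_singleKron_le (z : ι) (A : Matrix o o ℂ) : ‖singleKron z A‖ ≤ ‖A‖ :=
  NonUnitalStarAlgHom.norm_apply_le (singleKron z) A

theorem piKron_piecewise_insert (L : ι → Matrix o o ℂ) {s : Finset ι} {z : ι} (hz : z ∉ s) :
    piKron ((insert z s).piecewise L 1) = piKron (s.piecewise L 1) * singleKron z (L z) := by
  change _ = _ * piKron _
  rw [piKron_mul, Finset.piecewise_insert]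
  congr 1
  ext1 x
  by_cases hx : x = z
  · subst hx; simp [hz]
  · simp [hx]

theorem norm_le_one_of_mem_unitary {A : Type*} [NormedRing A] [StarRing A] [CStarRing A] {u : A}
    (hu : u ∈ unitary A) : ‖u‖ ≤ 1 := by
  rcases subsingleton_or_nontrivial A with h | h
  · simp [Subsingleton.elim u 0]
  · exact (CStarRing.norm_of_mem_unitary hu).le

theorem norm_piKron_piecewise_le (L : ι → Matrix o o ℂ) (c : ι → ℝ) (hL : ∀ z, ‖L z‖ ≤ c z)
    (s : Finset ι) : ‖piKron (s.piecewise L 1)‖ ≤ ∏ z ∈ s, c z := by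
  induction s using Finset.induction_on with
  | empty =>
    rw [Finset.piecewise_empty, piKron_one, Finset.prod_empty]
    exact norm_le_one_of_mem_unitary (one_mem _)
  | insert z s hz ih =>
    rw [piKron_piecewise_insert L hz, Finset.prod_insert hz, mul_comm (c z)]
    refine (norm_mul_le _ _).trans (mul_le_mul ih ((norm_singleKron_le _ _).trans (hL z))
      (norm_nonneg _) ((norm_nonneg _).trans ih))

theorem norm_piKron_piecewise_sub_le (L K : ι → Matrix o o ℂ) (δ : ι → ℝ)
    (hL : ∀ z, ‖L z‖ ≤ 1) (hδ : ∀ z, ‖L z - K z‖ ≤ δ z) (s : Finset ι) :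
    ‖piKron (s.piecewise L 1) - piKron (s.piecewise K 1)‖ ≤ ∏ z ∈ s, (1 + δ z) - 1 := by
  have hK z : ‖K z‖ ≤ 1 + δ z := by
    have := norm_sub_le (L z) (L z - K z)
    rw [sub_sub_cancel] at this
    linarith [hL z, hδ z]
  induction s using Finset.induction_on with
  | empty => simp
  | insert z s hz ih =>
    rw [piKron_piecewise_insert L hz, piKron_piecewise_insert K hz, Finset.prod_insert hz,
      show ∀ a b c d : Matrix (ι → o) (ι → o) ℂ, a * b - c * d = (a - c) * b + c * (b - d) by
        intros; noncomm_ring, ← map_sub]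
    have h1 := norm_mul_le (piKron (s.piecewise L 1) - piKron (s.piecewise K 1))
      (singleKron z (L z))
    have h2 := norm_mul_le (piKron (s.piecewise K 1)) (singleKron z (L z - K z))
    have h3 := norm_piKron_piecewise_le K _ hK s
    have h4 := (norm_singleKron_le z (L z)).trans (hL z)
    have h5 := (norm_singleKron_le z (L z - K z)).trans (hδ z)
    have h6 := mul_le_mul ih h4 (norm_nonneg _) ((norm_nonneg _).trans ih)
    have h7 := mul_le_mul h3 h5 (norm_nonneg _) ((norm_nonneg _).trans h3)
    refine (norm_add_le _ _).trans ?_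
    linarith

theorem norm_piKron_sub_le (L K : ι → Matrix o o ℂ) (δ : ι → ℝ)
    (hL : ∀ z, ‖L z‖ ≤ 1) (hδ : ∀ z, ‖L z - K z‖ ≤ δ z) :
    ‖piKron L - piKron K‖ ≤ ∏ z, (1 + δ z) - 1 := by
  simpa using norm_piKron_piecewise_sub_le L K δ hL hδ Finset.univ

theorem piKron_mulVec_apply (L : ι → Matrix o o ℂ) (g : (ι → o) → ℂ) (a : ι → o) :
    (piKron L *ᵥ g) a = ∑ b, (∏ z, L z (a z) (b z)) * g b := rfl

theorem sum_norm_sq_mulVec_le {m : Type*} [Fintype m] [DecidableEq m] (A : Matrix m m ℂ)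
    (g : m → ℂ) : ∑ a, ‖(A *ᵥ g) a‖ ^ 2 ≤ ‖A‖ ^ 2 * ∑ a, ‖g a‖ ^ 2 := by
  have h := l2_opNorm_mulVec A (WithLp.toLp 2 g)
  have h2 := pow_le_pow_left₀ (norm_nonneg _) h 2
  rwa [mul_pow, EuclideanSpace.norm_sq_eq, EuclideanSpace.norm_sq_eq] at h2

theorem sum_norm_sq_piKron_mulVec_le_of_unitary (L : ι → Matrix o o ℂ)
    (hL : ∀ z, L z ∈ unitary (Matrix o o ℂ)) (g : (ι → o) → ℂ) :
    ∑ a, ‖(piKron L *ᵥ g) a‖ ^ 2 ≤ ∑ a, ‖g a‖ ^ 2 := by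
  have h := norm_piKron_piecewise_le L 1 (fun z => norm_le_one_of_mem_unitary (hL z)) Finset.univ
  simp only [Finset.piecewise_univ, Pi.one_apply, Finset.prod_const_one] at h
  refine (sum_norm_sq_mulVec_le _ _).trans (mul_le_of_le_one_left (by positivity) ?_)
  exact pow_le_one₀ (norm_nonneg _) h

theorem norm_sq_le_sum_norm_sq (A : Matrix o o ℂ) : ‖A‖ ^ 2 ≤ ∑ i, ∑ j, ‖A i j‖ ^ 2 := by
  have h0 : 0 ≤ ∑ i, ∑ j, ‖A i j‖ ^ 2 := by positivity
  suffices ‖A‖ ≤ √(∑ i, ∑ j, ‖A i j‖ ^ 2) from (Real.le_sqrt (norm_nonneg _) h0).mp this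
  rw [l2_opNorm_def]
  refine ContinuousLinearMap.opNorm_le_bound _ (Real.sqrt_nonneg _) fun v => ?_
  rw [← sq_le_sq₀ (norm_nonneg _) (by positivity), mul_pow, Real.sq_sqrt h0,
    EuclideanSpace.norm_sq_eq, EuclideanSpace.norm_sq_eq, Finset.sum_mul]
  refine Finset.sum_le_sum fun i _ => ?_
  have h1 : ‖∑ j, A i j * v j‖ ≤ ∑ j, ‖A i j‖ * ‖v j‖ :=
    (norm_sum_le _ _).trans_eq (Finset.sum_congr rfl fun j _ => norm_mul _ _)
  exact (pow_le_pow_left₀ (norm_nonneg _) h1 2).trans (Finset.sum_mul_sq_le_sq_mul_sq _ _ _)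

theorem sum_norm_sq_row_of_mem_unitary {L : Matrix o o ℂ} (hL : L ∈ unitary (Matrix o o ℂ))
    (i : o) : ∑ j, ‖L i j‖ ^ 2 = 1 := by
  have h : (L * star L) i i = (1 : Matrix o o ℂ) i i := by rw [Unitary.mul_star_self_of_mem hL]
  rw [Matrix.mul_apply, one_apply_eq] at h
  have h2 : ((∑ j, ‖L i j‖ ^ 2 : ℝ) : ℂ) = 1 := by
    rw [← h]
    push_cast
    exact Finset.sum_congr rfl fun j _ => (Complex.mul_conj' _).symm
  exact_mod_cast h2

/-- The off-diagonal part of the rows of `L` with index in `A`. -/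
def offDiagRows (A : Finset o) (L : Matrix o o ℂ) : Matrix o o ℂ :=
  of fun i j => if i ∈ A ∧ i ≠ j then L i j else 0

theorem norm_sq_offDiagRows_le {L : Matrix o o ℂ} (hL : L ∈ unitary (Matrix o o ℂ))
    (A : Finset o) : ‖offDiagRows A L‖ ^ 2 ≤ ∑ i ∈ A, (1 - ‖L i i‖ ^ 2) := by
  refine (norm_sq_le_sum_norm_sq _).trans_eq ?_
  rw [← Finset.sum_subset (Finset.subset_univ A) fun i _ hi => ?_]
  · refine Finset.sum_congr rfl fun i hi => ?_
    rw [← sum_norm_sq_row_of_mem_unitary hL i, ← Finset.add_sum_erase _ _ (Finset.mem_univ i),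
      ← Finset.add_sum_erase _ (fun j => ‖L i j‖ ^ 2) (Finset.mem_univ i), add_sub_cancel_left]
    simp only [offDiagRows, of_apply, ne_eq, not_true_eq_false, and_false, if_false, norm_zero]
    rw [zero_pow two_ne_zero, zero_add]
    refine Finset.sum_congr rfl fun j hj => ?_
    rw [if_pos ⟨hi, (Finset.ne_of_mem_erase hj).symm⟩]
  · simp [offDiagRows, hi]

theorem one_add_pow_sub_one_le (m : ℕ) {δ : ℝ} (h0 : 0 ≤ δ) (h1 : m * δ ≤ 1) :
    (1 + δ) ^ m - 1 ≤ m * δ * Real.exp 1 := by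
  have h2 : (1 + δ) ^ m ≤ Real.exp (m * δ) := by
    rw [Real.exp_nat_mul]
    exact pow_le_pow_left₀ (by linarith) (by linarith [Real.add_one_le_exp δ]) m
  have h3 : Real.exp (m * δ) - 1 ≤ m * δ * Real.exp (m * δ) := by
    have h4 := Real.add_one_le_exp (-(m * δ))
    have h5 : Real.exp (-(m * δ)) * Real.exp (m * δ) = 1 := by rw [← Real.exp_add]; simp
    nlinarith [Real.exp_pos (m * δ)]
  have h6 := mul_le_mul_of_nonneg_left (Real.exp_le_exp.mpr h1)
    (by positivity : (0 : ℝ) ≤ m * δ)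
  linarith

/-- If every transition from `G` to `G'` allowed by `⨂ z, L z` changes the value at some place
`z ∈ s` to a value in `A z`, then the transition amplitude from `G` to `G'` is small. -/
theorem sum_norm_sq_piKron_mulVec_le (L : ι → Matrix o o ℂ)
    (hL : ∀ z, L z ∈ unitary (Matrix o o ℂ)) (s : Finset ι) (A : ι → Finset o) {δ : ℝ}
    (hδ0 : 0 ≤ δ) (hδ : ∀ z ∈ s, ∑ i ∈ A z, (1 - ‖L z i i‖ ^ 2) ≤ δ ^ 2)
    (G G' : Finset (ι → o))
    (hG : ∀ a ∈ G', ∀ b ∈ G, (∀ z, L z (a z) (b z) ≠ 0) → ∃ z ∈ s, a z ∈ A z ∧ a z ≠ b z)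
    (g : (ι → o) → ℂ) (hg : ∀ b ∉ G, g b = 0) :
    ∑ a ∈ G', ‖(piKron L *ᵥ g) a‖ ^ 2 ≤ (s.card * δ * Real.exp 1) ^ 2 * ∑ b, ‖g b‖ ^ 2 := by
  have hg0 : 0 ≤ ∑ b, ‖g b‖ ^ 2 := by positivity
  have hsub (F : (ι → o) → ℂ) : ∑ a ∈ G', ‖F a‖ ^ 2 ≤ ∑ a, ‖F a‖ ^ 2 :=
    Finset.sum_le_sum_of_subset_of_nonneg (Finset.subset_univ _) fun _ _ _ => by positivity
  have hL1 z : ‖L z‖ ≤ 1 := norm_le_one_of_mem_unitary (hL z)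
  rcases le_or_gt 1 (s.card * δ * Real.exp 1) with h1 | h1
  · refine (hsub _).trans ((sum_norm_sq_mulVec_le _ _).trans ?_)
    refine mul_le_mul_of_nonneg_right (pow_le_pow_left₀ (norm_nonneg _) (le_trans ?_ h1) 2) hg0
    simpa using norm_piKron_piecewise_le L 1 hL1 Finset.univ
  set K : ι → Matrix o o ℂ := fun z => if z ∈ s then L z - offDiagRows (A z) (L z) else L z with hK
  have hK0 : ∀ a ∈ G', (piKron K *ᵥ g) a = 0 := by
    intro a ha
    rw [piKron_mulVec_apply]
    refine Finset.sum_eq_zero fun b _ => ?_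
    by_cases hb : b ∈ G
    · refine mul_eq_zero_of_left ?_ _
      by_contra h
      have h' := fun z => Finset.prod_ne_zero_iff.mp h z (Finset.mem_univ z)
      have hLz : ∀ z, L z (a z) (b z) ≠ 0 := by
        intro z hz
        apply h' z
        simp only [hK]
        split_ifs <;> simp [offDiagRows, hz]
      obtain ⟨z, hz, hzA, hzb⟩ := hG a ha b hb hLz
      apply h' z
      simp [hK, hz, offDiagRows, hzA, hzb]
    · rw [hg b hb, mul_zero]
  have hLK z : ‖L z - K z‖ ≤ if z ∈ s then δ else 0 := by
    simp only [hK]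
    split_ifs with hz
    · rw [sub_sub_cancel, ← sq_le_sq₀ (norm_nonneg _) hδ0]
      exact (norm_sq_offDiagRows_le (hL z) (A z)).trans (hδ z hz)
    · simp
  have hdiff : ‖piKron L - piKron K‖ ≤ s.card * δ * Real.exp 1 := by
    refine (norm_piKron_sub_le L K _ hL1 hLK).trans ?_
    have : ∏ z, (1 + if z ∈ s then δ else 0) = (1 + δ) ^ s.card := by
      rw [← Finset.prod_const, ← Finset.prod_subset (Finset.subset_univ s)]
      · exact Finset.prod_congr rfl fun z hz => by rw [if_pos hz]
      · intro z _ hz; simp [hz]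
    rw [this]
    refine one_add_pow_sub_one_le _ hδ0 ?_
    have := Real.add_one_le_exp (1 : ℝ)
    nlinarith [mul_nonneg (Nat.cast_nonneg (α := ℝ) s.card) hδ0]
  calc ∑ a ∈ G', ‖(piKron L *ᵥ g) a‖ ^ 2
      = ∑ a ∈ G', ‖((piKron L - piKron K) *ᵥ g) a‖ ^ 2 :=
        Finset.sum_congr rfl fun a ha => by rw [Matrix.sub_mulVec, Pi.sub_apply, hK0 a ha, sub_zero]
    _ ≤ _ := hsub _
    _ ≤ _ := sum_norm_sq_mulVec_le _ _
    _ ≤ _ := mul_le_mul_of_nonneg_right (pow_le_pow_left₀ (norm_nonneg _) hdiff 2) hg0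

/-- A version of `sum_norm_sq_piKron_mulVec_le` in which the sets `A` may depend on a quantity `c`
conserved by the transitions. -/
theorem sum_norm_sq_piKron_mulVec_le_of_conserved {Γ : Type*} [Fintype Γ] [DecidableEq Γ]
    (L : ι → Matrix o o ℂ) (hL : ∀ z, L z ∈ unitary (Matrix o o ℂ)) (s : Finset ι)
    (c : (ι → o) → Γ) (hc : ∀ a b, (∀ z, L z (a z) (b z) ≠ 0) → c a = c b)
    (A : Γ → ι → Finset o) {δ : ℝ}
    (hδ0 : 0 ≤ δ) (hδ : ∀ γ, ∀ z ∈ s, ∑ i ∈ A γ z, (1 - ‖L z i i‖ ^ 2) ≤ δ ^ 2)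
    (G G' : Finset (ι → o))
    (hG : ∀ a ∈ G', ∀ b ∈ G, (∀ z, L z (a z) (b z) ≠ 0) → ∃ z ∈ s, a z ∈ A (c b) z ∧ a z ≠ b z)
    (g : (ι → o) → ℂ) (hg : ∀ b ∉ G, g b = 0) :
    ∑ a ∈ G', ‖(piKron L *ᵥ g) a‖ ^ 2 ≤ (s.card * δ * Real.exp 1) ^ 2 * ∑ b, ‖g b‖ ^ 2 := by
  rw [← Finset.sum_fiberwise G' c, ← Finset.sum_fiberwise Finset.univ c, Finset.mul_sum]
  refine Finset.sum_le_sum fun γ _ => ?_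
  have key := sum_norm_sq_piKron_mulVec_le L hL s (A γ) hδ0 (hδ γ) (G.filter (c · = γ))
    (G'.filter (c · = γ)) (fun a ha b hb h => by
      obtain ⟨hb1, rfl⟩ := Finset.mem_filter.mp hb
      exact hG a (Finset.mem_filter.mp ha).1 b hb1 h)
    (fun b => if c b = γ then g b else 0) (fun b hb => by
      by_cases h : c b = γ
      · rw [if_pos h]; exact hg b fun hb' => hb (Finset.mem_filter.mpr ⟨hb', h⟩)
      · rw [if_neg h])
  refine (Finset.sum_congr rfl fun a ha => ?_).trans_le (key.trans_eq ?_)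
  · obtain ⟨-, rfl⟩ := Finset.mem_filter.mp ha
    rw [piKron_mulVec_apply, piKron_mulVec_apply]
    congr 2
    refine Finset.sum_congr rfl fun b _ => ?_
    by_cases h : c b = c a
    · simp [h]
    · simp only [h, if_false, mul_zero]
      refine mul_eq_zero_of_left ?_ _
      by_contra h0
      exact h (hc a b fun z => Finset.prod_ne_zero_iff.mp h0 z (Finset.mem_univ z)).symm
  · rw [Finset.sum_filter]
    congr 1
    exact Finset.sum_congr rfl fun b _ => by split_ifs <;> simp

end ProductMatrix

section Compression

open Matrix

variable {Y : Type*} [Fintype Y] [DecidableEq Y]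

/-- The difference of the uniform superposition of the basis vectors `some y` and of the basis
vector `none`. -/
def compressionVector (Y : Type*) [Fintype Y] : Option Y → ℂ
  | none => -1
  | some _ => ((√(Fintype.card Y : ℝ))⁻¹ : ℝ)

/-- The local compression operator: the reflection exchanging the basis vector `none` with the
uniform superposition of the basis vectors `some y`. -/
def compression (Y : Type*) [Fintype Y] [DecidableEq Y] : Matrix (Option Y) (Option Y) ℂ :=
  1 - vecMulVec (compressionVector Y) (compressionVector Y)

theorem compressionVector_some_sq [Nonempty Y] (y : Y) :
    compressionVector Y (some y) * compressionVector Y (some y) = (Fintype.card Y : ℂ)⁻¹ := by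
  simp only [compressionVector]
  rw [← Complex.ofReal_mul, ← mul_inv, Real.mul_self_sqrt (by positivity)]
  simp

theorem compressionVector_dotProduct_self [Nonempty Y] :
    compressionVector Y ⬝ᵥ compressionVector Y = 2 := by
  have : (Fintype.card Y : ℂ) ≠ 0 := Nat.cast_ne_zero.mpr Fintype.card_ne_zero
  rw [dotProduct, Fintype.sum_option]
  simp only [compressionVector_some_sq, Finset.sum_const, Finset.card_univ, nsmul_eq_mul]
  rw [mul_inv_cancel₀ this]
  norm_num [compressionVector]

theorem compression_mul_self [Nonempty Y] : compression Y * compression Y = 1 := by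
  rw [compression, sub_mul, one_mul, mul_sub, mul_one, vecMulVec_mul_vecMulVec,
    compressionVector_dotProduct_self, vecMulVec_smul, ofNat_smul_eq_nsmul, two_nsmul]
  abel

theorem star_compression : star (compression Y) = compression Y := by
  rw [compression, star_sub, star_one, star_eq_conjTranspose, conjTranspose_vecMulVec]
  have : star (compressionVector Y) = compressionVector Y := by
    ext u; cases u <;> simp [compressionVector]
  rw [this]

theorem compression_mem_unitary [Nonempty Y] :
    compression Y ∈ unitary (Matrix (Option Y) (Option Y) ℂ) := by
  rw [Unitary.mem_iff, star_compression, compression_mul_self]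
  exact ⟨rfl, rfl⟩

theorem compression_some_some_self [Nonempty Y] (y : Y) :
    compression Y (some y) (some y) = ((1 - (Fintype.card Y : ℝ)⁻¹ : ℝ) : ℂ) := by
  rw [compression, Matrix.sub_apply, one_apply_eq, vecMulVec_apply, compressionVector_some_sq]
  simp

theorem compression_some_none (y : Y) :
    compression Y (some y) none = ((√(Fintype.card Y : ℝ))⁻¹ : ℝ) := by
  simp [compression, vecMulVec_apply, compressionVector]

theorem one_sub_le_norm_sq_compression [Nonempty Y] (y : Y) :
    1 - 2 / (Fintype.card Y : ℝ) ≤ ‖compression Y (some y) (some y)‖ ^ 2 := by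
  rw [compression_some_some_self, Complex.norm_real, Real.norm_eq_abs, sq_abs, div_eq_mul_inv]
  nlinarith [sq_nonneg ((Fintype.card Y : ℝ)⁻¹)]

/-- The action on a database entry of a query in the Fourier basis, where `w` lists the phases. -/
def compressedPhase (w : Option Y → ℂ) : Matrix (Option Y) (Option Y) ℂ :=
  compression Y * diagonal w * compression Y

theorem compressedPhase_one [Nonempty Y] : compressedPhase (1 : Option Y → ℂ) = 1 := by
  rw [compressedPhase, diagonal_one', mul_one, compression_mul_self]

theorem compressedPhase_mem_unitary [Nonempty Y] {w : Option Y → ℂ} (hw : ∀ u, ‖w u‖ = 1) :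
    compressedPhase w ∈ unitary (Matrix (Option Y) (Option Y) ℂ) := by
  refine mul_mem (mul_mem compression_mem_unitary ?_) compression_mem_unitary
  rw [Unitary.mem_iff, star_eq_conjTranspose, diagonal_conjTranspose, diagonal_mul_diagonal,
    diagonal_mul_diagonal, ← diagonal_one]
  constructor <;> congr 1 <;> ext1 u
  · rw [Pi.star_apply, Complex.star_def, Complex.conj_mul', hw]; simp
  · rw [Pi.star_apply, Complex.star_def, Complex.mul_conj', hw]; simp

theorem one_sub_norm_sq_compressedPhase_le [Nonempty Y] {w : Option Y → ℂ} (hw : ∀ u, ‖w u‖ = 1)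
    (y : Y) : 1 - ‖compressedPhase w (some y) (some y)‖ ^ 2 ≤ 8 / (Fintype.card Y : ℝ) := by
  have hrow := sum_norm_sq_row_of_mem_unitary (compression_mem_unitary (Y := Y)) (some y)
  have hterm u : ‖compression Y (some y) u * w u * compression Y u (some y)‖ =
      ‖compression Y (some y) u‖ ^ 2 := by
    have : compression Y u (some y) = star (compression Y (some y) u) := by
      conv_lhs => rw [← star_compression]
      rfl
    rw [norm_mul, norm_mul, hw, mul_one, this, norm_star, sq]
  have hL : compressedPhase w (some y) (some y) =
      ∑ u, compression Y (some y) u * w u * compression Y u (some y) := by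
    rw [compressedPhase, Matrix.mul_apply]
    simp only [Matrix.mul_diagonal]
  rw [← Finset.add_sum_erase _ _ (Finset.mem_univ (some y))] at hL hrow
  have h1 := norm_sum_le (Finset.univ.erase (some y))
    fun u => compression Y (some y) u * w u * compression Y u (some y)
  have h2 := norm_sub_le (compressedPhase w (some y) (some y))
    (∑ u ∈ Finset.univ.erase (some y), compression Y (some y) u * w u * compression Y u (some y))
  rw [hL, add_sub_cancel_right, ← hL, hterm] at h2
  simp only [hterm] at h1
  have h3 := one_sub_le_norm_sq_compression y
  have h4 : 8 / (Fintype.card Y : ℝ) = 4 * (2 / (Fintype.card Y : ℝ)) := by ring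
  nlinarith [sq_nonneg (1 - ‖compressedPhase w (some y) (some y)‖)]

end Compression

section Database

open Matrix
open scoped Classical

variable {X Y : Type*} [Fintype X] [DecidableEq X] [Fintype Y] [DecidableEq Y]

/-- The database `D` contains a chain of length `s` for the relation `rel`. -/
def HasChain (rel : Y → X → Prop) (s : ℕ) (D : X → Option Y) : Prop :=
  ∃ c : ℕ → X, ∀ i < s, ∃ y, D (c i) = some y ∧ rel y (c (i + 1))

/-- The values chaining to a point of `s` or to a point where the database `D` is defined. -/
def chainingValues (rel : Y → X → Prop) (s : Finset X) (D : X → Option Y) : Finset Y :=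
  (s ∪ Finset.univ.filter fun z => D z ≠ none).biUnion fun z => Finset.univ.filter fun y => rel y z

theorem card_filter_rel_le {rel : Y → X → Prop} {T : ℕ} (hT : ∀ a : X, {y : Y | rel y a}.ncard ≤ T)
    (a : X) : (Finset.univ.filter fun y => rel y a).card ≤ T := by
  rw [← Set.ncard_coe_finset]
  simpa using hT a

theorem card_chainingValues_le {rel : Y → X → Prop} {T : ℕ}
    (hT : ∀ a : X, {y : Y | rel y a}.ncard ≤ T) (s : Finset X) (D : X → Option Y) :
    (chainingValues rel s D).card ≤ (s.card + (Finset.univ.filter fun z => D z ≠ none).card) * T :=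
  (Finset.card_biUnion_le_card_mul _ _ T fun a _ => card_filter_rel_le hT a).trans
    (Nat.mul_le_mul_right T (Finset.card_union_le _ _))

/-- Lengthening the longest chain requires changing a value to a chaining value. -/
theorem exists_chainingValue {rel : Y → X → Prop} {n : ℕ} {s : Finset X} {D D' : X → Option Y}
    (hD : ¬HasChain rel n D) (hD' : HasChain rel (n + 1) D') (h : ∀ z ∉ s, D' z = D z) :
    ∃ z ∈ s, (∃ y ∈ chainingValues rel s (s.piecewise (fun _ => none) D), D' z = some y) ∧
      D' z ≠ D z := by
  obtain ⟨c, hc⟩ := hD'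
  have h1 : ∃ i < n, ¬∃ y, D (c i) = some y ∧ rel y (c (i + 1)) := by
    by_contra! h1
    exact hD ⟨c, h1⟩
  obtain ⟨i, hi, h1⟩ := h1
  obtain ⟨y, hy, hrel⟩ := hc i (by omega)
  obtain ⟨y', hy', -⟩ := hc (i + 1) (by omega)
  have hne : D' (c i) ≠ D (c i) := fun h2 => h1 ⟨y, h2 ▸ hy, hrel⟩
  refine ⟨c i, by_contra fun h2 => hne (h _ h2), ⟨y, ?_, hy⟩, hne⟩
  refine Finset.mem_biUnion.mpr ⟨c (i + 1), ?_, by simpa using hrel⟩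
  by_cases h3 : c (i + 1) ∈ s
  · exact Finset.mem_union_left _ h3
  · refine Finset.mem_union_right _ ?_
    simp [h3, ← h _ h3, hy']

theorem sum_map_some_le {L : Matrix (Option Y) (Option Y) ℂ} {ε : ℝ}
    (hL : ∀ y, 1 - ‖L (some y) (some y)‖ ^ 2 ≤ ε) (A : Finset Y) :
    ∑ i ∈ A.map Function.Embedding.some, (1 - ‖L i i‖ ^ 2) ≤ A.card * ε := by
  rw [Finset.sum_map, ← nsmul_eq_mul]
  exact Finset.sum_le_card_nsmul _ _ _ fun y _ => hL y

/-- A single parallel query at the places `s` of a small database is unlikely to lengthen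
the longest chain. -/
theorem sum_norm_sq_query_le [Nonempty Y] {rel : Y → X → Prop} {T : ℕ}
    (hT : ∀ a : X, {y : Y | rel y a}.ncard ≤ T) (s : Finset X) {m n : ℕ}
    (w : X → Option Y → ℂ) (hw : ∀ z u, ‖w z u‖ = 1) (hws : ∀ z ∉ s, w z = 1)
    (g : (X → Option Y) → ℂ)
    (hg : ∀ D, g D ≠ 0 → ¬HasChain rel n D ∧ (Finset.univ.filter fun z => D z ≠ none).card ≤ m) :
    ∑ D with HasChain rel (n + 1) D, ‖(piKron (fun z => compressedPhase (w z)) *ᵥ g) D‖ ^ 2 ≤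
      (s.card * √(((s.card + m) * T : ℕ) * (8 / (Fintype.card Y : ℝ))) * Real.exp 1) ^ 2 *
        ∑ D, ‖g D‖ ^ 2 := by
  have hoff : ∀ a b : X → Option Y, (∀ z, compressedPhase (w z) (a z) (b z) ≠ 0) →
      ∀ z ∉ s, a z = b z := by
    intro a b h z hz
    by_contra hne
    apply h z
    rw [hws z hz, compressedPhase_one, one_apply_ne hne]
  refine sum_norm_sq_piKron_mulVec_le_of_conserved _
    (fun z => compressedPhase_mem_unitary (hw z)) s (fun D => s.piecewise (fun _ => none) D) ?_
    (fun γ _ => if (Finset.univ.filter fun z => γ z ≠ none).card ≤ m then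
      (chainingValues rel s γ).map Function.Embedding.some else ∅) (Real.sqrt_nonneg _) ?_
    (Finset.univ.filter fun D =>
      ¬HasChain rel n D ∧ (Finset.univ.filter fun z => D z ≠ none).card ≤ m) _ ?_ g ?_
  · intro a b h
    ext1 z
    by_cases hz : z ∈ s
    · simp [hz]
    · simp [hz, hoff a b h z hz]
  · intro γ z _
    rw [Real.sq_sqrt (by positivity)]
    split_ifs with h
    · refine (sum_map_some_le (one_sub_norm_sq_compressedPhase_le (hw z)) _).trans ?_
      gcongr
      exact (card_chainingValues_le hT s γ).trans (by gcongr)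
    · rw [Finset.sum_empty]; positivity
  · intro a ha b hb h
    rw [Finset.mem_filter] at ha hb
    obtain ⟨z, hz, ⟨y, hy, hay⟩, hne⟩ := exists_chainingValue hb.2.1 ha.2 (hoff a b h)
    refine ⟨z, hz, ?_, hne⟩
    rw [if_pos, hay]
    · exact Finset.mem_map_of_mem _ hy
    · refine (Finset.card_le_card fun x hx => ?_).trans hb.2.2
      by_cases hxs : x ∈ s <;> simp_all
  · intro D hD
    by_contra h
    exact hD (Finset.mem_filter.mpr ⟨Finset.mem_univ _, hg D h⟩)

/-- Decompressing a database without a chain of length `n` is unlikely to produce a chain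
at any fixed `x`. -/
theorem sum_norm_sq_readout_le [Nonempty X] [Nonempty Y] {rel : Y → X → Prop} {T : ℕ}
    (hT : ∀ a : X, {y : Y | rel y a}.ncard ≤ T) {n : ℕ} (x : Fin (n + 1) → X)
    (g : (X → Option Y) → ℂ) (hg : ∀ D, g D ≠ 0 → ¬HasChain rel n D) :
    ∑ D : X → Option Y with
        ∀ i : Fin n, ∃ y, D (x i.castSucc) = some y ∧ rel y (x i.succ),
      ‖(piKron (fun _ => compression Y) *ᵥ g) D‖ ^ 2 ≤
      (n * √(T * (8 / (Fintype.card Y : ℝ))) * Real.exp 1) ^ 2 * ∑ D, ‖g D‖ ^ 2 := by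
  set s : Finset X := Finset.univ.image fun i : Fin n => x i.castSucc with hs
  have hcard : s.card ≤ n := Finset.card_image_le.trans (by simp)
  refine (sum_norm_sq_piKron_mulVec_le _ (fun _ => compression_mem_unitary) s
    (fun z => (Finset.univ.filter fun y => ∀ i : Fin n, x i.castSucc = z → rel y (x i.succ)).map
      Function.Embedding.some) (Real.sqrt_nonneg (T * (8 / (Fintype.card Y : ℝ)))) ?_
    (Finset.univ.filter fun D => ¬HasChain rel n D) _ ?_ g ?_).trans ?_
  · intro z hz
    obtain ⟨i, -, hi⟩ := Finset.mem_image.mp hz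
    rw [Real.sq_sqrt (by positivity)]
    refine (sum_map_some_le (ε := 8 / (Fintype.card Y : ℝ)) (fun y => ?_) _).trans ?_
    · have h1 := one_sub_le_norm_sq_compression y
      have h2 : 2 / (Fintype.card Y : ℝ) ≤ 8 / (Fintype.card Y : ℝ) := by gcongr; norm_num
      linarith
    · gcongr
      refine (Finset.card_le_card fun y hy => ?_).trans (card_filter_rel_le hT (x i.succ))
      simp only [Finset.mem_filter, Finset.mem_univ, true_and] at hy ⊢
      exact hy i hi
  · intro a ha b hb _
    simp only [Finset.mem_filter, Finset.mem_univ, true_and] at ha hb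
    have h1 : ∃ i : Fin n, ¬∃ y, b (x i.castSucc) = some y ∧ rel y (x i.succ) := by
      by_contra! h1
      refine hb ⟨fun j => if h : j < n + 1 then x ⟨j, h⟩ else Classical.arbitrary X,
        fun j hj => ?_⟩
      simp only [Nat.lt_succ_of_lt hj, Nat.succ_lt_succ hj, dif_pos]
      exact h1 ⟨j, hj⟩
    obtain ⟨i, hi⟩ := h1
    obtain ⟨y, hy, hrel⟩ := ha i
    refine ⟨x i.castSucc, Finset.mem_image_of_mem _ (Finset.mem_univ i), ?_, fun h => ?_⟩
    · rw [hy]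
      refine Finset.mem_map_of_mem _ ?_
      simp only [Finset.mem_filter, Finset.mem_univ, true_and]
      intro j hj
      obtain ⟨y', hy', hrel'⟩ := ha j
      rw [hj, hy, Option.some_inj] at hy'
      exact hy' ▸ hrel'
    · exact hi ⟨y, h ▸ hy, hrel⟩
  · intro D hD
    by_contra h
    exact hD (Finset.mem_filter.mpr ⟨Finset.mem_univ _, hg D h⟩)
  · gcongr

end Database

section MatrixAction

variable {m V W : Type*} [Fintype m] [NormedAddCommGroup V] [NormedSpace ℂ V]
  [AddCommGroup W] [Module ℂ W]

/-- The action of a complex matrix on a family of vectors. -/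
def vecAction (K : Matrix m m ℂ) (Φ : m → W) : m → W := fun a => ∑ b, K a b • Φ b

theorem vecAction_vecAction (K L : Matrix m m ℂ) (Φ : m → W) :
    vecAction K (vecAction L Φ) = vecAction (K * L) Φ := by
  ext a
  simp only [vecAction, Finset.smul_sum, Matrix.mul_apply, Finset.sum_smul, smul_smul]
  exact Finset.sum_comm

theorem vecAction_one [DecidableEq m] (Φ : m → W) : vecAction 1 Φ = Φ := by
  ext a
  simp [vecAction, Matrix.one_apply]

theorem vecAction_add (K : Matrix m m ℂ) (Φ Ψ : m → W) :
    vecAction K (Φ + Ψ) = vecAction K Φ + vecAction K Ψ := by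
  ext a
  simp [vecAction, Finset.sum_add_distrib]

theorem map_vecAction {V' : Type*} [AddCommGroup V'] [Module ℂ V'] (f : W →ₗ[ℂ] V')
    (K : Matrix m m ℂ) (Φ : m → W) (a : m) :
    f (vecAction K Φ a) = vecAction K (fun b => f (Φ b)) a := by
  simp [vecAction]

theorem vecAction_eq_mulVec (K : Matrix m m ℂ) (g : m → ℂ) : vecAction K g = K.mulVec g := rfl

/-- The `ℓ²` norm of a family of vectors. -/
def l2Norm (Φ : m → V) : ℝ := ‖(WithLp.toLp 2 Φ : PiLp 2 fun _ : m => V)‖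

theorem l2Norm_nonneg (Φ : m → V) : 0 ≤ l2Norm Φ := norm_nonneg _

theorem l2Norm_sq (Φ : m → V) : l2Norm Φ ^ 2 = ∑ a, ‖Φ a‖ ^ 2 :=
  PiLp.norm_sq_eq_of_L2 _ _

theorem l2Norm_add_le (Φ Ψ : m → V) : l2Norm (Φ + Ψ) ≤ l2Norm Φ + l2Norm Ψ := by
  rw [l2Norm, WithLp.toLp_add]
  exact norm_add_le _ _

theorem l2Norm_le_of_sum_le {m' V' : Type*} [Fintype m'] [NormedAddCommGroup V'] [NormedSpace ℂ V']
    {Φ : m → V} {Ψ : m' → V'} {c : ℝ} (hc : 0 ≤ c)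
    (h : ∑ a, ‖Φ a‖ ^ 2 ≤ c ^ 2 * ∑ a, ‖Ψ a‖ ^ 2) : l2Norm Φ ≤ c * l2Norm Ψ := by
  rw [← sq_le_sq₀ (l2Norm_nonneg _) (mul_nonneg hc (l2Norm_nonneg _)), mul_pow, l2Norm_sq, l2Norm_sq]
  exact h

open scoped Classical in
/-- The family `Φ` restricted to the indices satisfying `P`. -/
def mask (P : m → Prop) (Φ : m → W) : m → W := fun a => if P a then Φ a else 0

theorem mask_add (P : m → Prop) (Φ Ψ : m → W) : mask P (Φ + Ψ) = mask P Φ + mask P Ψ := by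
  ext a
  by_cases h : P a <;> simp [mask, h]

theorem mask_add_mask_not (P : m → Prop) (Φ : m → W) :
    mask P Φ + mask (fun a => ¬P a) Φ = Φ := by
  ext a
  by_cases h : P a <;> simp [mask, h]

open scoped Classical in
theorem sum_norm_sq_mask (P : m → Prop) (Φ : m → V) :
    ∑ a, ‖mask P Φ a‖ ^ 2 = ∑ a with P a, ‖Φ a‖ ^ 2 := by
  rw [Finset.sum_filter]
  refine Finset.sum_congr rfl fun a _ => ?_
  by_cases h : P a <;> simp [mask, h]

theorem l2Norm_mask_le (P : m → Prop) (Φ : m → V) : l2Norm (mask P Φ) ≤ l2Norm Φ := by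
  rw [← sq_le_sq₀ (l2Norm_nonneg _) (l2Norm_nonneg _), l2Norm_sq, l2Norm_sq]
  refine Finset.sum_le_sum fun a _ => ?_
  by_cases h : P a <;> simp [mask, h]

open scoped Classical in
theorem norm_mask_eq (P : m → Prop) (Φ : m → V) (a : m) :
    ‖mask P Φ a‖ = if P a then ‖Φ a‖ else 0 := by
  by_cases h : P a <;> simp [mask, h]

theorem l2Norm_congr_of_norm_eq {Φ Ψ : m → V} (h : ∀ a, ‖Φ a‖ = ‖Ψ a‖) : l2Norm Φ = l2Norm Ψ := by
  rw [← sq_eq_sq₀ (l2Norm_nonneg _) (l2Norm_nonneg _), l2Norm_sq, l2Norm_sq]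
  simp only [h]

end MatrixAction

section Fourier

variable {X G Z : Type*} [Fintype X] [DecidableEq X] [AddCommGroup G] [Fintype G] [DecidableEq G]
  [Fintype Z] [DecidableEq Z]

/-- The coefficient, at `x`, the character `χ` and `w`, of the Fourier transform of a vector
with respect to the group register. -/
def registerCoeff (x : X) (χ : AddChar G ℂ) (w : Z) : EuclideanSpace ℂ (X × G × Z) →ₗ[ℂ] ℂ where
  toFun v := ∑ y, χ y * v (x, y, w)
  map_add' u v := by simp [mul_add, Finset.sum_add_distrib]
  map_smul' c v := by
    simp only [PiLp.smul_apply, smul_eq_mul, RingHom.id_apply, Finset.mul_sum]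
    exact Finset.sum_congr rfl fun y _ => by ring

theorem registerCoeff_apply (x : X) (χ : AddChar G ℂ) (w : Z) (v : EuclideanSpace ℂ (X × G × Z)) :
    registerCoeff x χ w v = ∑ y, χ y * v (x, y, w) := rfl

theorem registerCoeff_single (x x' : X) (χ : AddChar G ℂ) (w w' : Z) (y : G) :
    registerCoeff x χ w (EuclideanSpace.single (x', y, w') 1) =
      if x = x' ∧ w = w' then χ y else 0 := by
  rw [registerCoeff_apply, Finset.sum_eq_single y]
  · by_cases hx : x = x' <;> by_cases hw : w = w' <;> simp [hx, hw]
  · intro y' _ hy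
    simp [hy]
  · simp

theorem sum_norm_sq_addChar_sum (a : G → ℂ) :
    ∑ χ : AddChar G ℂ, ‖∑ y, χ y * a y‖ ^ 2 = Fintype.card G * ∑ y, ‖a y‖ ^ 2 := by
  have h : ∑ χ : AddChar G ℂ, (∑ y, χ y * a y) * (starRingEnd ℂ) (∑ y, χ y * a y) =
      Fintype.card G * ∑ y, a y * (starRingEnd ℂ) (a y) := by
    calc ∑ χ : AddChar G ℂ, (∑ y, χ y * a y) * (starRingEnd ℂ) (∑ y, χ y * a y)
        = ∑ χ : AddChar G ℂ, ∑ y, ∑ y', χ (y - y') * (a y * (starRingEnd ℂ) (a y')) := by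
          refine Finset.sum_congr rfl fun χ _ => ?_
          rw [map_sum, Finset.sum_mul_sum]
          refine Finset.sum_congr rfl fun y _ => Finset.sum_congr rfl fun y' _ => ?_
          rw [sub_eq_add_neg, AddChar.map_add_eq_mul, AddChar.map_neg_eq_conj, map_mul]
          ring
      _ = ∑ y, ∑ y', (∑ χ : AddChar G ℂ, χ (y - y')) * (a y * (starRingEnd ℂ) (a y')) := by
          rw [Finset.sum_comm]
          refine Finset.sum_congr rfl fun y _ => ?_
          rw [Finset.sum_comm]
          exact Finset.sum_congr rfl fun y' _ => (Finset.sum_mul _ _ _).symm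
      _ = _ := by
          simp [AddChar.sum_apply_eq_ite, sub_eq_zero, ite_mul, Finset.mul_sum]
  simp only [Complex.mul_conj'] at h
  exact_mod_cast h

theorem sum_norm_sq_registerCoeff (v : EuclideanSpace ℂ (X × G × Z)) :
    ∑ x, ∑ χ, ∑ w, ‖registerCoeff x χ w v‖ ^ 2 = Fintype.card G * ‖v‖ ^ 2 := by
  rw [EuclideanSpace.norm_sq_eq, Fintype.sum_prod_type, Finset.mul_sum]
  refine Finset.sum_congr rfl fun x _ => ?_
  rw [Finset.sum_comm, Fintype.sum_prod_type_right, Finset.mul_sum]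
  exact Finset.sum_congr rfl fun w _ => sum_norm_sq_addChar_sum fun y => v (x, y, w)

end Fourier

section Query

open Matrix
open scoped Classical

variable {X Y : Type*} [Fintype X] [DecidableEq X] [Fintype Y] [DecidableEq Y] [AddCommGroup Y]
  {k d : ℕ}

/-- The phase picked up by the entry `u` at the place `z` of the database in a parallel query at
`x`, in the Fourier mode `χ`. -/
def queryPhase (x : Fin k → X) (χ : AddChar (Fin k → Y) ℂ) (z : X) (u : Option Y) : ℂ :=
  χ fun i => if x i = z then u.getD 0 else 0

theorem norm_queryPhase (x : Fin k → X) (χ : AddChar (Fin k → Y) ℂ) (z : X) (u : Option Y) :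
    ‖queryPhase x χ z u‖ = 1 := χ.norm_apply _

theorem queryPhase_eq_one (x : Fin k → X) (χ : AddChar (Fin k → Y) ℂ) {z : X}
    (hz : z ∉ Finset.univ.image x) : queryPhase x χ z = 1 := by
  ext u
  have h i : x i ≠ z := fun hi => hz (Finset.mem_image.mpr ⟨i, Finset.mem_univ i, hi⟩)
  simp only [queryPhase, h, if_false, Pi.one_apply]
  exact χ.map_zero_eq_one

theorem prod_queryPhase (x : Fin k → X) (χ : AddChar (Fin k → Y) ℂ) (D : X → Option Y) :
    ∏ z, queryPhase x χ z (D z) = χ fun i => (D (x i)).getD 0 := by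
  simp only [queryPhase]
  have h := map_prod χ.toMonoidHom (fun z => Multiplicative.ofAdd fun i : Fin k =>
    if x i = z then (D z).getD 0 else 0) Finset.univ
  rw [← ofAdd_sum] at h
  have hsum : (∑ z, fun i : Fin k => if x i = z then (D z).getD 0 else 0) =
      fun i => (D (x i)).getD 0 := by
    ext i
    simp [Finset.sum_apply]
  rw [hsum] at h
  exact h.symm

theorem piKron_compression_mul_diagonal_mul (w : X → Option Y → ℂ) :
    piKron (fun _ => compression Y) * diagonal (fun D : X → Option Y => ∏ z, w z (D z)) *
      piKron (fun _ => compression Y) = piKron fun z => compressedPhase (w z) := by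
  rw [← piKron_diagonal, piKron_mul, piKron_mul]
  rfl

theorem piKron_compression_mul_self [Nonempty Y] :
    piKron (fun _ : X => compression Y) * piKron (fun _ => compression Y) = 1 := by
  rw [piKron_mul, ← piKron_one]
  congr 1
  ext1 z
  exact compression_mul_self

/-- A query to the compressed oracle. -/
def compressedQuery {V : Type*} [NormedAddCommGroup V] [NormedSpace ℂ V]
    (O : (X → Y) → V →L[ℂ] V) (Φ : (X → Option Y) → V) : (X → Option Y) → V :=
  vecAction (piKron fun _ => compression Y) fun D =>
    O (fun z => (D z).getD 0) (vecAction (piKron fun _ => compression Y) Φ D)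

theorem compressedQuery_add {V : Type*} [NormedAddCommGroup V] [NormedSpace ℂ V]
    (O : (X → Y) → V →L[ℂ] V) (Φ Ψ : (X → Option Y) → V) :
    compressedQuery O (Φ + Ψ) = compressedQuery O Φ + compressedQuery O Ψ := by
  rw [compressedQuery, vecAction_add]
  simp only [Pi.add_apply, map_add]
  exact vecAction_add _ _ _

variable {O : (X → Y) → (EuclideanSpace ℂ ((Fin k → X) × (Fin k → Y) × Fin d) →L[ℂ]
  EuclideanSpace ℂ ((Fin k → X) × (Fin k → Y) × Fin d))}

theorem registerCoeff_oracle
    (hO : ∀ (H : X → Y) (x : Fin k → X) (y : Fin k → Y) (wr : Fin d),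
      O H (EuclideanSpace.single (x, y, wr) 1) =
        EuclideanSpace.single (x, fun i => y i + H (x i), wr) 1)
    (H : X → Y) (x : Fin k → X) (χ : AddChar (Fin k → Y) ℂ) (w : Fin d)
    (v : EuclideanSpace ℂ ((Fin k → X) × (Fin k → Y) × Fin d)) :
    registerCoeff x χ w (O H v) = χ (fun i => H (x i)) * registerCoeff x χ w v := by
  have h : registerCoeff x χ w ∘ₗ (O H).toLinearMap =
      χ (fun i => H (x i)) • registerCoeff x χ w := by
    refine (EuclideanSpace.basisFun _ ℂ).toBasis.ext fun b => ?_
    obtain ⟨x', y, w'⟩ := b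
    simp only [OrthonormalBasis.coe_toBasis, EuclideanSpace.basisFun_apply, LinearMap.comp_apply,
      ContinuousLinearMap.coe_coe, hO, LinearMap.smul_apply, registerCoeff_single, smul_eq_mul]
    split_ifs with h
    · rw [h.1, ← AddChar.map_add_eq_mul, add_comm]
      rfl
    · rw [mul_zero]
  exact LinearMap.congr_fun h v

theorem registerCoeff_compressedQuery
    (hO : ∀ (H : X → Y) (x : Fin k → X) (y : Fin k → Y) (wr : Fin d),
      O H (EuclideanSpace.single (x, y, wr) 1) =
        EuclideanSpace.single (x, fun i => y i + H (x i), wr) 1)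
    (Φ : (X → Option Y) → EuclideanSpace ℂ ((Fin k → X) × (Fin k → Y) × Fin d))
    (x : Fin k → X) (χ : AddChar (Fin k → Y) ℂ) (w : Fin d) (D : X → Option Y) :
    registerCoeff x χ w (compressedQuery O Φ D) =
      (piKron (fun z => compressedPhase (queryPhase x χ z)) *ᵥ
        fun D => registerCoeff x χ w (Φ D)) D := by
  rw [compressedQuery, map_vecAction, ← piKron_compression_mul_diagonal_mul, ← mulVec_mulVec,
    ← mulVec_mulVec]
  simp only [registerCoeff_oracle hO, map_vecAction, ← prod_queryPhase, vecAction_eq_mulVec]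
  congr 2
  ext D
  rw [mulVec_diagonal]

/-- Bounds on the transitions of a compressed query may be checked on each Fourier mode. -/
theorem sum_norm_sq_compressedQuery_le
    (hO : ∀ (H : X → Y) (x : Fin k → X) (y : Fin k → Y) (wr : Fin d),
      O H (EuclideanSpace.single (x, y, wr) 1) =
        EuclideanSpace.single (x, fun i => y i + H (x i), wr) 1)
    (Φ : (X → Option Y) → EuclideanSpace ℂ ((Fin k → X) × (Fin k → Y) × Fin d))
    (P : Finset (X → Option Y)) (c : ℝ)
    (h : ∀ x χ w, ∑ D ∈ P, ‖(piKron (fun z => compressedPhase (queryPhase x χ z)) *ᵥ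
        fun D => registerCoeff x χ w (Φ D)) D‖ ^ 2 ≤ c * ∑ D, ‖registerCoeff x χ w (Φ D)‖ ^ 2) :
    ∑ D ∈ P, ‖compressedQuery O Φ D‖ ^ 2 ≤ c * ∑ D, ‖Φ D‖ ^ 2 := by
  have hcard : (0 : ℝ) < Fintype.card (Fin k → Y) := Nat.cast_pos.mpr Fintype.card_pos
  have hswap (Q : Finset (X → Option Y))
      (Ψ : (X → Option Y) → EuclideanSpace ℂ ((Fin k → X) × (Fin k → Y) × Fin d)) :
      Fintype.card (Fin k → Y) * ∑ D ∈ Q, ‖Ψ D‖ ^ 2 =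
        ∑ x, ∑ χ, ∑ w, ∑ D ∈ Q, ‖registerCoeff x χ w (Ψ D)‖ ^ 2 := by
    simp only [Finset.mul_sum, ← sum_norm_sq_registerCoeff]
    rw [Finset.sum_comm]
    refine Finset.sum_congr rfl fun x _ => ?_
    rw [Finset.sum_comm]
    exact Finset.sum_congr rfl fun χ _ => Finset.sum_comm
  rw [← mul_le_mul_iff_right₀ hcard, hswap, mul_left_comm, hswap]
  simp only [Finset.mul_sum]
  refine Finset.sum_le_sum fun x _ => Finset.sum_le_sum fun χ _ => Finset.sum_le_sum fun w _ => ?_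
  simp only [registerCoeff_compressedQuery hO, ← Finset.mul_sum]
  exact h x χ w

theorem l2Norm_compressedQuery_le [Nonempty Y]
    (hO : ∀ (H : X → Y) (x : Fin k → X) (y : Fin k → Y) (wr : Fin d),
      O H (EuclideanSpace.single (x, y, wr) 1) =
        EuclideanSpace.single (x, fun i => y i + H (x i), wr) 1)
    (Φ : (X → Option Y) → EuclideanSpace ℂ ((Fin k → X) × (Fin k → Y) × Fin d)) :
    l2Norm (compressedQuery O Φ) ≤ l2Norm Φ := by
  rw [← one_mul (l2Norm Φ)]
  refine l2Norm_le_of_sum_le zero_le_one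
    (sum_norm_sq_compressedQuery_le hO Φ Finset.univ _ fun x χ w => ?_)
  rw [one_pow, one_mul]
  exact sum_norm_sq_piKron_mulVec_le_of_unitary _
    (fun z => compressedPhase_mem_unitary (norm_queryPhase x χ z)) _

theorem card_le_of_compressedQuery_ne_zero [Nonempty Y]
    (hO : ∀ (H : X → Y) (x : Fin k → X) (y : Fin k → Y) (wr : Fin d),
      O H (EuclideanSpace.single (x, y, wr) 1) =
        EuclideanSpace.single (x, fun i => y i + H (x i), wr) 1)
    (Φ : (X → Option Y) → EuclideanSpace ℂ ((Fin k → X) × (Fin k → Y) × Fin d)) {m : ℕ}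
    (hΦ : ∀ D, Φ D ≠ 0 → (Finset.univ.filter fun z => D z ≠ none).card ≤ m)
    (D : X → Option Y) (hD : compressedQuery O Φ D ≠ 0) :
    (Finset.univ.filter fun z => D z ≠ none).card ≤ k + m := by
  by_contra hlt
  have key := sum_norm_sq_compressedQuery_le hO Φ {D} 0 fun x χ w => by
    rw [Finset.sum_singleton, zero_mul, piKron_mulVec_apply, Finset.sum_eq_zero, norm_zero,
      zero_pow two_ne_zero]
    intro D' _
    by_cases h0 : Φ D' = 0
    · rw [h0, map_zero, mul_zero]
    refine mul_eq_zero_of_left (by_contra fun h => hlt ?_) _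
    have h' := fun z => Finset.prod_ne_zero_iff.mp h z (Finset.mem_univ z)
    have hsub : (Finset.univ.filter fun z => D z ≠ none) ⊆
        Finset.univ.image x ∪ Finset.univ.filter fun z => D' z ≠ none := by
      intro z hz
      by_cases hzx : z ∈ Finset.univ.image x
      · exact Finset.mem_union_left _ hzx
      · have h2 := h' z
        rw [queryPhase_eq_one x χ hzx, compressedPhase_one] at h2
        have h3 : D z = D' z := by_contra fun hne => h2 (one_apply_ne hne)
        refine Finset.mem_union_right _ ?_
        simpa [h3] using hz
    refine (Finset.card_le_card hsub).trans ((Finset.card_union_le _ _).trans ?_)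
    exact add_le_add (Finset.card_image_le.trans (by simp)) (hΦ D' h0)
  rw [Finset.sum_singleton, zero_mul] at key
  exact hD (norm_eq_zero.mp (pow_eq_zero_iff two_ne_zero |>.mp (le_antisymm key (by positivity))))

theorem l2Norm_mask_compressedQuery_le [Nonempty Y]
    (hO : ∀ (H : X → Y) (x : Fin k → X) (y : Fin k → Y) (wr : Fin d),
      O H (EuclideanSpace.single (x, y, wr) 1) =
        EuclideanSpace.single (x, fun i => y i + H (x i), wr) 1)
    {rel : Y → X → Prop} {T : ℕ} (hT : ∀ a : X, {y : Y | rel y a}.ncard ≤ T) {m n : ℕ}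
    (Φ : (X → Option Y) → EuclideanSpace ℂ ((Fin k → X) × (Fin k → Y) × Fin d))
    (hΦ : ∀ D, Φ D ≠ 0 →
      ¬HasChain rel n D ∧ (Finset.univ.filter fun z => D z ≠ none).card ≤ m) :
    l2Norm (mask (HasChain rel (n + 1)) (compressedQuery O Φ)) ≤
      k * √(((k + m) * T : ℕ) * (8 / (Fintype.card Y : ℝ))) * Real.exp 1 * l2Norm Φ := by
  refine l2Norm_le_of_sum_le (by positivity) ?_
  rw [sum_norm_sq_mask]
  refine sum_norm_sq_compressedQuery_le hO Φ _ _ fun x χ w => ?_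
  have hcard : (Finset.univ.image x).card ≤ k := Finset.card_image_le.trans (by simp)
  refine (sum_norm_sq_query_le hT (Finset.univ.image x) (queryPhase x χ) (norm_queryPhase x χ)
    (fun z => queryPhase_eq_one x χ) _
    fun D hD => hΦ D fun h0 => hD (by rw [h0, map_zero])).trans ?_
  gcongr

end Query

section CompressedState

open scoped Classical

variable {X Y : Type*} [Fintype X] [DecidableEq X] [Fintype Y] [DecidableEq Y]

/-- The joint state of the algorithm and the compressed oracle after `n` queries. -/
def compressedState [AddCommGroup Y] {V : Type*} [NormedAddCommGroup V] [NormedSpace ℂ V]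
    (U : ℕ → V →L[ℂ] V) (O : (X → Y) → V →L[ℂ] V) (ψ : V) : ℕ → (X → Option Y) → V
  | 0 => Pi.single (fun _ => none) (U 0 ψ)
  | n + 1 => fun D => U (n + 1) (compressedQuery O (compressedState U O ψ n) D)

/-- Decompressing the state recovers the final state of the algorithm, for a uniform
superposition of the oracles. -/
theorem vecAction_compressedState [AddCommGroup Y] {V : Type*} [NormedAddCommGroup V]
    [NormedSpace ℂ V] (U : ℕ → V →L[ℂ] V) (O : (X → Y) → V →L[ℂ] V) (ψ : V) (n : ℕ) (H : X → Y) :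
    vecAction (piKron fun _ => compression Y) (compressedState U O ψ n) (fun z => some (H z)) =
      (((√(Fintype.card Y : ℝ))⁻¹ ^ Fintype.card X : ℝ) : ℂ) • runOp U (O H) n ψ := by
  induction n with
  | zero =>
    rw [vecAction, Finset.sum_eq_single fun _ => none]
    · simp [compressedState, piKron_apply, compression_some_none, runOp]
    · intro D _ hD
      simp [compressedState, hD]
    · simp
  | succ n ih =>
    have h := map_vecAction (U (n + 1)).toLinearMap (piKron fun _ : X => compression Y)
      (compressedQuery O (compressedState U O ψ n)) fun z => some (H z)
    simp only [ContinuousLinearMap.coe_coe] at h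
    rw [show compressedState U O ψ (n + 1) = fun D => U (n + 1)
      (compressedQuery O (compressedState U O ψ n) D) from rfl, ← h, compressedQuery,
      vecAction_vecAction, piKron_compression_mul_self, vecAction_one]
    simp only [Option.getD_some, ih, map_smul]
    rfl

theorem not_hasChain_succ_none (rel : Y → X → Prop) (n : ℕ) :
    ¬HasChain rel (n + 1) (fun _ : X => none) := by
  rintro ⟨c, hc⟩
  obtain ⟨y, hy, -⟩ := hc 0 n.succ_pos
  simp at hy

variable [AddCommGroup Y] {k d : ℕ}
  {U : ℕ → (EuclideanSpace ℂ ((Fin k → X) × (Fin k → Y) × Fin d) →L[ℂ]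
    EuclideanSpace ℂ ((Fin k → X) × (Fin k → Y) × Fin d))}
  {O : (X → Y) → (EuclideanSpace ℂ ((Fin k → X) × (Fin k → Y) × Fin d) →L[ℂ]
    EuclideanSpace ℂ ((Fin k → X) × (Fin k → Y) × Fin d))}
  {ψ : EuclideanSpace ℂ ((Fin k → X) × (Fin k → Y) × Fin d)} {q : ℕ}

theorem l2Norm_compressedState_le
    (hO : ∀ (H : X → Y) (x : Fin k → X) (y : Fin k → Y) (wr : Fin d),
      O H (EuclideanSpace.single (x, y, wr) 1) =
        EuclideanSpace.single (x, fun i => y i + H (x i), wr) 1)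
    (hU : ∀ i ≤ q, ∀ v, ‖U i v‖ = ‖v‖) {n : ℕ} (hn : n ≤ q) :
    l2Norm (compressedState U O ψ n) ≤ ‖ψ‖ := by
  induction n with
  | zero =>
    rw [← sq_le_sq₀ (l2Norm_nonneg _) (norm_nonneg _), l2Norm_sq,
      Finset.sum_eq_single fun _ => none]
    · simp [compressedState, hU 0 hn]
    · intro D _ hD
      simp [compressedState, hD]
    · simp
  | succ n ih =>
    refine le_trans (le_of_eq ?_) ((l2Norm_compressedQuery_le hO _).trans (ih (by omega)))
    exact l2Norm_congr_of_norm_eq fun D => hU _ hn _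

theorem card_le_of_compressedState_ne_zero
    (hO : ∀ (H : X → Y) (x : Fin k → X) (y : Fin k → Y) (wr : Fin d),
      O H (EuclideanSpace.single (x, y, wr) 1) =
        EuclideanSpace.single (x, fun i => y i + H (x i), wr) 1)
    (n : ℕ) (D : X → Option Y) (hD : compressedState U O ψ n D ≠ 0) :
    (Finset.univ.filter fun z => D z ≠ none).card ≤ n * k := by
  induction n generalizing D with
  | zero =>
    have : D = fun _ => none := by
      by_contra h
      exact hD (Pi.single_eq_of_ne h _)
    simp [this]
  | succ n ih =>
    refine (card_le_of_compressedQuery_ne_zero hO _ ih D fun h0 => hD ?_).trans_eq (by ring)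
    simp [compressedState, h0]

theorem l2Norm_mask_compressedState_le
    (hO : ∀ (H : X → Y) (x : Fin k → X) (y : Fin k → Y) (wr : Fin d),
      O H (EuclideanSpace.single (x, y, wr) 1) =
        EuclideanSpace.single (x, fun i => y i + H (x i), wr) 1)
    (hU : ∀ i ≤ q, ∀ v, ‖U i v‖ = ‖v‖) (hψ : ‖ψ‖ ≤ 1)
    {rel : Y → X → Prop} {T : ℕ} (hT : ∀ a : X, {y : Y | rel y a}.ncard ≤ T)
    {n : ℕ} (hn : n ≤ q) :
    l2Norm (mask (HasChain rel (n + 1)) (compressedState U O ψ n)) ≤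
      n * (k * √((q * k * T : ℕ) * (8 / (Fintype.card Y : ℝ))) * Real.exp 1) := by
  induction n with
  | zero =>
    have h0 : mask (HasChain rel (0 + 1)) (compressedState U O ψ 0) = 0 := by
      ext1 D
      by_cases hD : D = fun _ => none
      · simp [mask, hD, not_hasChain_succ_none]
      · simp [mask, compressedState, Pi.single_eq_of_ne hD]
    rw [h0, ← sq_le_sq₀ (l2Norm_nonneg _) (by simp), l2Norm_sq]
    simp
  | succ n ih =>
    set Φ := compressedState U O ψ n with hΦ
    have h1 : l2Norm (mask (HasChain rel (n + 1 + 1)) (compressedState U O ψ (n + 1))) =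
        l2Norm (mask (HasChain rel (n + 1 + 1)) (compressedQuery O Φ)) := by
      refine l2Norm_congr_of_norm_eq fun D => ?_
      rw [norm_mask_eq, norm_mask_eq, compressedState, hU _ hn]
    have h2 := congrArg (fun Ψ => mask (HasChain rel (n + 1 + 1)) (compressedQuery O Ψ))
      (mask_add_mask_not (HasChain rel (n + 1)) Φ)
    simp only [compressedQuery_add, mask_add] at h2
    rw [h1, ← h2]
    refine (l2Norm_add_le _ _).trans ?_
    have h3 := ((l2Norm_mask_le (HasChain rel (n + 1 + 1)) _).trans
      (l2Norm_compressedQuery_le hO _)).trans (ih (by omega))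
    have h4 := l2Norm_mask_compressedQuery_le (n := n + 1) (m := n * k) hO hT
      (mask (fun D => ¬HasChain rel (n + 1) D) Φ) fun D hD => by
        by_cases hc : HasChain rel (n + 1) D
        · simp [mask, hc] at hD
        · simp only [mask, hc, not_false_eq_true, if_true] at hD
          exact ⟨hc, card_le_of_compressedState_ne_zero hO n D hD⟩
    have h5 : l2Norm (mask (fun D => ¬HasChain rel (n + 1) D) Φ) ≤ 1 :=
      (l2Norm_mask_le _ _).trans ((l2Norm_compressedState_le hO hU (by omega)).trans hψ)
    have h6 : ((k + n * k) * T : ℕ) ≤ q * k * T := by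
      rw [add_comm, ← Nat.succ_mul]
      gcongr
    have h7 : k * √(((k + n * k) * T : ℕ) * (8 / (Fintype.card Y : ℝ))) * Real.exp 1 *
        l2Norm (mask (fun D => ¬HasChain rel (n + 1) D) Φ) ≤
        k * √((q * k * T : ℕ) * (8 / (Fintype.card Y : ℝ))) * Real.exp 1 := by
      refine (mul_le_of_le_one_right (by positivity) h5).trans ?_
      gcongr
    push_cast at *
    linarith

/-- The part of the decompressed state with successful readout. -/
def readoutState {s : ℕ} {B : Type*} [Fintype B] (rel : Y → X → Prop) (out : B → Fin (s + 1) → X)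
    (Φ : (X → Option Y) → EuclideanSpace ℂ B) : B × (X → Option Y) → ℂ :=
  fun p => mask (fun D : X → Option Y =>
      ∀ i : Fin s, ∃ y, D (out p.1 i.castSucc) = some y ∧ rel y (out p.1 i.succ))
    (fun D => vecAction (piKron fun _ => compression Y) Φ D p.1) p.2

theorem readoutState_add {s : ℕ} {B : Type*} [Fintype B] (rel : Y → X → Prop)
    (out : B → Fin (s + 1) → X) (Φ Ψ : (X → Option Y) → EuclideanSpace ℂ B) :
    readoutState rel out (Φ + Ψ) = readoutState rel out Φ + readoutState rel out Ψ := by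
  ext p
  simp only [readoutState, vecAction_add, Pi.add_apply, PiLp.add_apply]
  exact congrFun (mask_add _ (fun D => vecAction (piKron fun _ => compression Y) Φ D p.1)
    (fun D => vecAction (piKron fun _ => compression Y) Ψ D p.1)) p.2

theorem l2Norm_readoutState_le_of_sum_le {s : ℕ} {B : Type*} [Fintype B] [DecidableEq B]
    (rel : Y → X → Prop) (out : B → Fin (s + 1) → X)
    (Φ : (X → Option Y) → EuclideanSpace ℂ B) {c : ℝ} (hc : 0 ≤ c)
    (h : ∀ b, ∑ D : X → Option Y with
      ∀ i : Fin s, ∃ y, D (out b i.castSucc) = some y ∧ rel y (out b i.succ),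
        ‖((piKron fun _ => compression Y).mulVec fun D => Φ D b) D‖ ^ 2 ≤
      c ^ 2 * ∑ D, ‖Φ D b‖ ^ 2) :
    l2Norm (readoutState rel out Φ) ≤ c * l2Norm Φ := by
  refine l2Norm_le_of_sum_le hc ?_
  simp only [Fintype.sum_prod_type, EuclideanSpace.norm_sq_eq]
  rw [Finset.sum_comm (s := Finset.univ (α := X → Option Y)), Finset.mul_sum]
  refine Finset.sum_le_sum fun b _ => le_trans (le_of_eq ?_) (h b)
  simp only [readoutState]
  rw [sum_norm_sq_mask]
  refine Finset.sum_congr (by congr) fun D _ => ?_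
  rw [← vecAction_eq_mulVec]
  exact congrArg (fun c : ℂ => ‖c‖ ^ 2)
    (map_vecAction (EuclideanSpace.proj (𝕜 := ℂ) b).toLinearMap _ Φ D)

theorem l2Norm_readoutState_le {s : ℕ} {B : Type*} [Fintype B] [DecidableEq B]
    (rel : Y → X → Prop) (out : B → Fin (s + 1) → X)
    (Φ : (X → Option Y) → EuclideanSpace ℂ B) :
    l2Norm (readoutState rel out Φ) ≤ l2Norm Φ := by
  rw [← one_mul (l2Norm Φ)]
  refine l2Norm_readoutState_le_of_sum_le rel out Φ zero_le_one fun b => ?_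
  rw [one_pow, one_mul]
  exact (Finset.sum_le_univ_sum_of_nonneg fun D => sq_nonneg _).trans
    (sum_norm_sq_piKron_mulVec_le_of_unitary _ (fun _ => compression_mem_unitary) _)

theorem l2Norm_readoutState_le_of_not_hasChain [Nonempty X] {rel : Y → X → Prop} {T : ℕ}
    (hT : ∀ a : X, {y : Y | rel y a}.ncard ≤ T) {s : ℕ} {B : Type*} [Fintype B] [DecidableEq B]
    (out : B → Fin (s + 1) → X)
    (Φ : (X → Option Y) → EuclideanSpace ℂ B) (hΦ : ∀ D, Φ D ≠ 0 → ¬HasChain rel s D) :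
    l2Norm (readoutState rel out Φ) ≤
      s * √(T * (8 / (Fintype.card Y : ℝ))) * Real.exp 1 * l2Norm Φ := by
  refine l2Norm_readoutState_le_of_sum_le rel out Φ (by positivity) fun b => ?_
  refine sum_norm_sq_readout_le hT (out b) _ fun D hD => hΦ D fun h0 => hD ?_
  rw [h0]
  rfl

/-- The success probability is at most the squared norm of the successful part of the
decompressed state. -/
theorem success_le_l2Norm_readoutState_sq {B : Type*} [Fintype B] [DecidableEq B]
    (U : ℕ → (EuclideanSpace ℂ B →L[ℂ] EuclideanSpace ℂ B))
    (O : (X → Y) → (EuclideanSpace ℂ B →L[ℂ] EuclideanSpace ℂ B)) (ψ : EuclideanSpace ℂ B)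
    (rel : Y → X → Prop) {s : ℕ} (out : B → Fin (s + 1) → X) (n : ℕ) :
    (∑ H : X → Y, ∑ b : B, if ∀ i : Fin s, rel (H (out b i.castSucc)) (out b i.succ)
        then ‖inner (𝕜 := ℂ) (EuclideanSpace.single b 1) (runOp U (O H) n ψ)‖ ^ 2 else 0) /
        (Fintype.card Y : ℝ) ^ Fintype.card X ≤
      l2Norm (readoutState rel out (compressedState U O ψ n)) ^ 2 := by
  rw [l2Norm_sq, Fintype.sum_prod_type, Finset.sum_comm, Finset.sum_div]
  refine Finset.sum_le_sum fun b _ => ?_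
  rw [Finset.sum_div]
  have hinj : Function.Injective fun (H : X → Y) (z : X) => some (H z) := fun H H' h =>
    funext fun z => Option.some_injective _ (congrFun h z)
  refine le_trans (le_of_eq ?_) (Finset.sum_le_univ_sum_of_nonneg
    (s := Finset.univ.map ⟨_, hinj⟩) fun D => sq_nonneg _)
  rw [Finset.sum_map]
  refine Finset.sum_congr rfl fun H _ => ?_
  simp only [Function.Embedding.coeFn_mk, readoutState, norm_mask_eq, vecAction_compressedState,
    Option.some.injEq, exists_eq_left', PiLp.smul_apply, norm_smul,
    EuclideanSpace.inner_single_left, map_one, one_mul]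
  split_ifs
  · rw [Complex.norm_real, Real.norm_of_nonneg (by positivity), mul_pow, ← pow_mul,
      mul_comm (Fintype.card X), pow_mul, inv_pow, Real.sq_sqrt (by positivity), inv_pow,
      div_eq_inv_mul]
  · simp

end CompressedState

open Classical in
theorem stmt_16 {X Y : Type*} [Fintype X] [DecidableEq X] [Nonempty X]
    [Fintype Y] [DecidableEq Y] [AddCommGroup Y]
    -- the relation `◁` and the bound `T` with `|{y : y ◁ x}| ≤ T` for all `x`
    (rel : Y → X → Prop) (T : ℕ) (hT : ∀ a : X, {y : Y | rel y a}.ncard ≤ T)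
    (k q : ℕ) (hk : 1 ≤ k) (hq : 1 ≤ q)
    -- a `k`-parallel `q`-query quantum oracle algorithm `(d, ψ₀, U_0, …, U_q)`
    (d : ℕ) (hd : 1 ≤ d)
    (ψ0 : EuclideanSpace ℂ ((Fin k → X) × (Fin k → Y) × Fin d)) (hψ0 : ‖ψ0‖ = 1)
    (U : ℕ → (EuclideanSpace ℂ ((Fin k → X) × (Fin k → Y) × Fin d) →L[ℂ]
              EuclideanSpace ℂ ((Fin k → X) × (Fin k → Y) × Fin d)))
    (hU : ∀ i ≤ q,
      U i ∈ unitary (EuclideanSpace ℂ ((Fin k → X) × (Fin k → Y) × Fin d) →L[ℂ]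
        EuclideanSpace ℂ ((Fin k → X) × (Fin k → Y) × Fin d)))
    -- the oracle unitary `O_H`, permuting the basis by `(x, y, w) ↦ (x, y + H(x), w)`
    (O : (X → Y) → (EuclideanSpace ℂ ((Fin k → X) × (Fin k → Y) × Fin d) →L[ℂ]
        EuclideanSpace ℂ ((Fin k → X) × (Fin k → Y) × Fin d)))
    (hO : ∀ (H : X → Y) (x : Fin k → X) (y : Fin k → Y) (wr : Fin d),
      O H (EuclideanSpace.single (x, y, wr) 1) =
        EuclideanSpace.single (x, fun i => y i + H (x i), wr) 1)
    -- an arbitrary readout function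
    (out : ((Fin k → X) × (Fin k → Y) × Fin d) → Fin (q + 2) → X) :
    -- the success probability `p` of producing a `(q+1)`-chain ...
    (∑ H : X → Y, ∑ b : (Fin k → X) × (Fin k → Y) × Fin d,
        if ∀ i : Fin (q + 1), rel (H (out b i.castSucc)) (out b i.succ)
        then ‖inner (𝕜 := ℂ) (EuclideanSpace.single b 1) (runOp U (O H) q ψ0)‖ ^ 2
        else 0) / (Fintype.card Y : ℝ) ^ (Fintype.card X)
      -- ... is bounded as claimed
      ≤ (q * k * Real.exp 1 * Real.sqrt (10 * q * k * T / Fintype.card Y) +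
          Real.exp 1 * (q + 2) * Real.sqrt (10 * T * (q + 2) / Fintype.card Y) +
          Real.sqrt ((q + 2) / Fintype.card Y)) ^ 2 := by
  have hUn : ∀ i ≤ q, ∀ v, ‖U i v‖ = ‖v‖ := fun i hi v =>
    ContinuousLinearMap.norm_map_of_mem_unitary (hU i hi) v
  refine (success_le_l2Norm_readoutState_sq U O ψ0 rel out q).trans
    (pow_le_pow_left₀ (l2Norm_nonneg _) ?_ 2)
  set Φ := compressedState U O ψ0 q
  rw [← mask_add_mask_not (HasChain rel (q + 1)) Φ, readoutState_add]
  refine (l2Norm_add_le _ _).trans ?_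
  have h1 := (l2Norm_readoutState_le rel out _).trans
    (l2Norm_mask_compressedState_le (ψ := ψ0) hO hUn hψ0.le hT le_rfl)
  have h2 := l2Norm_readoutState_le_of_not_hasChain hT out
    (mask (fun D => ¬HasChain rel (q + 1) D) Φ) fun D hD hc => hD (by simp [mask, hc])
  have h3 : l2Norm (mask (fun D => ¬HasChain rel (q + 1) D) Φ) ≤ 1 :=
    (l2Norm_mask_le _ _).trans ((l2Norm_compressedState_le hO hUn le_rfl).trans hψ0.le)
  have h4 := h2.trans (mul_le_of_le_one_right (by positivity) h3)
  have h5 : √((q * k * T : ℕ) * (8 / (Fintype.card Y : ℝ))) ≤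
      √(10 * q * k * T / Fintype.card Y) := by
    refine Real.sqrt_le_sqrt ?_
    rw [← mul_div_assoc]
    push_cast
    refine div_le_div_of_nonneg_right ?_ (Nat.cast_nonneg _)
    nlinarith [show (0 : ℝ) ≤ q * k * T by positivity]
  have h6 : √(T * (8 / (Fintype.card Y : ℝ))) ≤ √(10 * T * (q + 2) / Fintype.card Y) := by
    refine Real.sqrt_le_sqrt ?_
    rw [← mul_div_assoc]
    refine div_le_div_of_nonneg_right ?_ (Nat.cast_nonneg _)
    nlinarith [show (0 : ℝ) ≤ T * q by positivity, show (0 : ℝ) ≤ T by positivity]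
  have h7 : q * (k * √((q * k * T : ℕ) * (8 / (Fintype.card Y : ℝ))) * Real.exp 1) ≤
      q * k * Real.exp 1 * √(10 * q * k * T / Fintype.card Y) := by
    calc _ = q * k * Real.exp 1 * √((q * k * T : ℕ) * (8 / (Fintype.card Y : ℝ))) := by ring
      _ ≤ _ := by gcongr
  have h8 : ((q + 1 : ℕ) : ℝ) * √(T * (8 / (Fintype.card Y : ℝ))) * Real.exp 1 ≤
      Real.exp 1 * (q + 2) * √(10 * T * (q + 2) / Fintype.card Y) := by
    calc _ = Real.exp 1 * (q + 1) * √(T * (8 / (Fintype.card Y : ℝ))) := by push_cast; ring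
      _ ≤ _ := by gcongr; norm_num
  have h9 : 0 ≤ √(((q : ℝ) + 2) / Fintype.card Y) := Real.sqrt_nonneg _
  exact (add_le_add (h1.trans h7) (h4.trans h8)).trans (le_add_of_nonneg_right h9)

end
end
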